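/- arXiv:1104.3659 — 5 statements merged into one kernel-verified Lean document; each statement's English description precedes it below -/
import Mathlib

section
/- Let α, a, b be complex numbers such that none of α+a, α−a, α+b, α−b is a nonpositive integer. Then ∑_{k=0}^∞ (k+α)/(((k+α)² − a²)((k+α)² − b²)) = (1/2) ∑_{n=1}^∞ (−1)^{n−1} · (1+a+b)_{n−1}(1+a−b)_{n−1}(1−a+b)_{n−1}(1−a−b)_{n−1} · (α+a)_{n−1}(α−a)_{n−1}(α+b)_{n−1}(α−b)_{n−1} / (n · C(2n, n) · (α+a)_{2n}(α−a)_{2n}(α+b)_{2n}(α−b)_{2n}) · q(n), where q(n) = 2(2n−1)(3n+2α−3)((2n+α−1)² − a²)((2n+α−1)² − b²) + ((n+α−1)² − a²)((n+α−1)² − b²)(13n² − 10n(1−α) + 2(1−α)² − a² − b²). -/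
/-!
The identity is a Markov–WZ acceleration. Put `D y = (y² - a²)(y² - b²)`,
`P n x = D (x+n) ⋯ D (x+2n)` and
`c n = (-1)ⁿ (1+a+b)ₙ (1+a-b)ₙ (1-a+b)ₙ (1-a-b)ₙ / (2 C(2n,n))`. With

* `T n x = c n (2x + 3n) / P n x`,
* `E n x = c n q n x / (2 (2n+1) P n (x+1))`, where `q` is the quadratic factor of the right side,

one has `T (n+1) x = T n (x+1) + E n (x+1) - E n x` (`T_succ`); after the denominators are cleared
this is a polynomial identity. Since `T 0 (α+k)` is the `k`-th term of the left side, summing over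
`k` gives `S n - S (n+1) = T n α + E n α` for `S n = ∑ₖ T n (α+k)`, and `T n α + E n α` is half the
`n`-th term of the right side. The uniform bound `‖c n / P n (α+k)‖ (k+1)⁴ ≤ C 2⁻ⁿ` (`U_bound`)
provides the convergence of every series involved, and `S n → 0`.
-/

/-- Pochhammer symbol `(x)_n = x (x+1) ⋯ (x+n-1)`. -/
noncomputable def poch (x : ℂ) (n : ℕ) : ℂ := ∏ i ∈ Finset.range n, (x + i)

open Finset Filter Topology

namespace MarkovWZ

/-- The denominator `(y² - a²)(y² - b²)` of a term of the left-hand series, at `y = k + α`. -/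
noncomputable def D (a b y : ℂ) : ℂ := (y ^ 2 - a ^ 2) * (y ^ 2 - b ^ 2)

/-- The product `D (x+n) ⋯ D (x+2n)`. -/
noncomputable def P (a b : ℂ) (n : ℕ) (x : ℂ) : ℂ := ∏ j ∈ range (n + 1), D a b (x + n + j)

/-- The coefficient `(-1)ⁿ (1+a+b)ₙ (1+a-b)ₙ (1-a+b)ₙ (1-a-b)ₙ / (2 C(2n,n))`. -/
noncomputable def c (a b : ℂ) (n : ℕ) : ℂ :=
  (-1) ^ n * (poch (1 + a + b) n * poch (1 + a - b) n * poch (1 - a + b) n * poch (1 - a - b) n) /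
    (2 * (n.centralBinom : ℂ))

/-- The factor `c n / P n x` of `T n x`; it enters `E n x` at `x + 1`. -/
noncomputable def U (a b : ℂ) (n : ℕ) (x : ℂ) : ℂ := c a b n / P a b n x

/-- The quadratic factor of the right-hand series, with its index shifted to start at `0`. -/
noncomputable def q (a b : ℂ) (n : ℕ) (x : ℂ) : ℂ :=
  13 * ((n : ℂ) + 1) ^ 2 - 10 * ((n : ℂ) + 1) * (1 - x) + 2 * (1 - x) ^ 2 - a ^ 2 - b ^ 2

/-- The summand of the `n`-th remainder; for `n = 0` it is the summand of the left-hand series. -/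
noncomputable def T (a b : ℂ) (n : ℕ) (x : ℂ) : ℂ := (2 * x + 3 * n) * U a b n x

/-- The correction whose difference in `x` turns `T n` into `T (n+1)`. -/
noncomputable def E (a b : ℂ) (n : ℕ) (x : ℂ) : ℂ :=
  q a b n x / (2 * (2 * (n : ℂ) + 1)) * U a b n (x + 1)

/-! ### The Markov–WZ pair -/

lemma two_n_add_one_ne (n : ℕ) : (2 * (n : ℂ) + 1) ≠ 0 := by
  exact_mod_cast Nat.succ_ne_zero (2 * n)

lemma poch_succ (x : ℂ) (n : ℕ) : poch x (n + 1) = poch x n * (x + n) := by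
  simp [poch, prod_range_succ]

lemma c_succ (a b : ℂ) (n : ℕ) :
    c a b (n + 1) = - c a b n * ((n + 1 + a + b) * (n + 1 + a - b) * (n + 1 - a + b) *
      (n + 1 - a - b)) * (n + 1) / (2 * (2 * n + 1)) := by
  have h : ((n : ℂ) + 1) * ((n + 1).centralBinom : ℂ) = 2 * (2 * n + 1) * (n.centralBinom : ℂ) := by
    exact_mod_cast Nat.succ_mul_centralBinom_succ n
  have h0 : (n.centralBinom : ℂ) ≠ 0 := by exact_mod_cast n.centralBinom_ne_zero
  have h1 : ((n + 1).centralBinom : ℂ) ≠ 0 := by exact_mod_cast (n + 1).centralBinom_ne_zero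
  have h2 := two_n_add_one_ne n
  have h3 : ((n : ℂ) + 1) ≠ 0 := by exact_mod_cast Nat.succ_ne_zero n
  have h4 : ((n + 1).centralBinom : ℂ) = 2 * (2 * n + 1) * (n.centralBinom : ℂ) / (n + 1) := by
    rw [← h]; field_simp
  unfold c
  rw [h4]
  simp only [poch_succ]
  field_simp
  ring

lemma P_succ (a b : ℂ) (n : ℕ) (x : ℂ) :
    P a b (n + 1) x = P a b n (x + 1) * D a b (x + 2 * n + 2) := by
  unfold P
  rw [prod_range_succ]
  congr 1
  · refine prod_congr rfl fun j _ => ?_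
    push_cast; congr 1; ring
  · push_cast; congr 1; ring

lemma P_mul (a b : ℂ) (n : ℕ) (x : ℂ) :
    ∏ j ∈ range (n + 2), D a b (x + n + j) = P a b n x * D a b (x + 2 * n + 1) := by
  unfold P
  rw [prod_range_succ]
  congr 1
  push_cast; congr 1; ring

lemma P_mul' (a b : ℂ) (n : ℕ) (x : ℂ) :
    P a b n x * D a b (x + 2 * n + 1) = D a b (x + n) * P a b n (x + 1) := by
  rw [← P_mul, prod_range_succ', mul_comm]
  unfold P
  congr 1
  · simp
  · refine prod_congr rfl fun j _ => ?_
    push_cast; congr 1; ring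

/-- The Markov–WZ relation; `D_ne` keeps all denominators away from the junk value `z / 0 = 0`. -/
lemma T_succ (a b x : ℂ) (n : ℕ) (D_ne : ∀ k : ℕ, D a b (x + k) ≠ 0) :
    T a b (n + 1) x = T a b n (x + 1) + E a b n (x + 1) - E a b n x := by
  have hd1 : D a b (x + 1 + n) ≠ 0 := by
    have := D_ne (1 + n); push_cast at this; rwa [← add_assoc] at this
  have hd2 : D a b (x + 2 * n + 2) ≠ 0 := by
    have := D_ne (2 * n + 2); push_cast at this; rwa [← add_assoc] at this
  have hP : P a b n (x + 1) ≠ 0 := by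
    unfold P
    refine prod_ne_zero_iff.mpr fun j _ => ?_
    have := D_ne (1 + n + j); push_cast at this; simpa only [← add_assoc] using this
  have hP2 : P a b n (x + 1 + 1) = P a b n (x + 1) * D a b (x + 2 * n + 2) / D a b (x + 1 + n) := by
    rw [eq_div_iff hd1, mul_comm, ← P_mul']
    congr 2; ring
  have h2 := two_n_add_one_ne n
  unfold T E U
  rw [P_succ, hP2, c_succ]
  field_simp
  unfold D q
  push_cast
  ring

lemma poch_four (a b α : ℂ) (m : ℕ) :
    poch (α + a) m * poch (α - a) m * poch (α + b) m * poch (α - b) m =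
      ∏ j ∈ range m, D a b (α + j) := by
  unfold poch
  rw [← prod_mul_distrib, ← prod_mul_distrib, ← prod_mul_distrib]
  refine prod_congr rfl fun j _ => ?_
  unfold D; ring

/-- Half the `n`-th term of the right-hand series is `T n α + E n α`. -/
lemma term_eq (a b α : ℂ) (n : ℕ) (D_ne : ∀ k : ℕ, D a b (α + k) ≠ 0) :
    (1 / 2) * ((-1 : ℂ) ^ n *
            (poch (1 + a + b) n * poch (1 + a - b) n * poch (1 - a + b) n *
              poch (1 - a - b) n) *
            (poch (α + a) n * poch (α - a) n * poch (α + b) n * poch (α - b) n) /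
            (((n : ℂ) + 1) * (Nat.choose (2 * (n + 1)) (n + 1) : ℂ) *
              (poch (α + a) (2 * (n + 1)) * poch (α - a) (2 * (n + 1)) *
                poch (α + b) (2 * (n + 1)) * poch (α - b) (2 * (n + 1)))) *
            (2 * (2 * ((n : ℂ) + 1) - 1) * (3 * ((n : ℂ) + 1) + 2 * α - 3) *
                ((2 * ((n : ℂ) + 1) + α - 1) ^ 2 - a ^ 2) *
                ((2 * ((n : ℂ) + 1) + α - 1) ^ 2 - b ^ 2) +
              ((((n : ℂ) + 1) + α - 1) ^ 2 - a ^ 2) *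
                ((((n : ℂ) + 1) + α - 1) ^ 2 - b ^ 2) *
                (13 * ((n : ℂ) + 1) ^ 2 - 10 * ((n : ℂ) + 1) * (1 - α) +
                  2 * (1 - α) ^ 2 - a ^ 2 - b ^ 2)))
      = T a b n α + E a b n α := by
  have h : ((n : ℂ) + 1) * (Nat.choose (2 * (n + 1)) (n + 1) : ℂ) =
      2 * (2 * n + 1) * (n.centralBinom : ℂ) := by
    exact_mod_cast Nat.succ_mul_centralBinom_succ n
  have h0 : (n.centralBinom : ℂ) ≠ 0 := by exact_mod_cast n.centralBinom_ne_zero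
  have h2 := two_n_add_one_ne n
  have hd1 : D a b (α + n) ≠ 0 := D_ne n
  have hd2 : D a b (α + 2 * n + 1) ≠ 0 := by
    have := D_ne (2 * n + 1); push_cast at this; rwa [← add_assoc] at this
  have hP : P a b n α ≠ 0 := by
    unfold P
    refine prod_ne_zero_iff.mpr fun j _ => ?_
    have := D_ne (n + j); push_cast at this; rwa [← add_assoc] at this
  have hn : ∏ j ∈ range n, D a b (α + j) ≠ 0 := prod_ne_zero_iff.mpr fun j _ => D_ne j
  have hprod : ∏ j ∈ range (2 * (n + 1)), D a b (α + j) =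
      (∏ j ∈ range n, D a b (α + j)) * (P a b n α * D a b (α + 2 * n + 1)) := by
    rw [← P_mul, show 2 * (n + 1) = n + (n + 2) by ring, prod_range_add]
    congr 1
    refine prod_congr rfl fun j _ => ?_
    push_cast; rw [add_assoc]
  have hPs : P a b n (α + 1) = P a b n α * D a b (α + 2 * n + 1) / D a b (α + n) := by
    rw [eq_div_iff hd1, mul_comm, ← P_mul']
  have e1 : ((2 * ((n : ℂ) + 1) + α - 1) ^ 2 - a ^ 2) * ((2 * ((n : ℂ) + 1) + α - 1) ^ 2 - b ^ 2)
      = D a b (α + 2 * n + 1) := by unfold D; ring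
  have e2 : ((((n : ℂ) + 1) + α - 1) ^ 2 - a ^ 2) * ((((n : ℂ) + 1) + α - 1) ^ 2 - b ^ 2)
      = D a b (α + n) := by unfold D; ring
  rw [poch_four, poch_four, hprod, h, e2, mul_assoc (2 * (2 * ((n : ℂ) + 1) - 1) * _), e1]
  unfold T E U
  rw [hPs]
  unfold c q
  field_simp
  ring

/-! ### Growth of the denominators and decay of `T` and `E` -/

/-- A shift of a complex number off the nonpositive integers has at least linear growth. -/
lemma exists_linear_bound (z : ℂ) (hz : ∀ k : ℕ, z ≠ -(k : ℂ)) :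
    ∃ C : ℝ, 0 ≤ C ∧ ∀ k : ℕ, (k : ℝ) + 1 ≤ C * ‖z + k‖ := by
  have hne : ∀ k : ℕ, z + k ≠ 0 := fun k h => hz k (eq_neg_of_add_eq_zero_left h)
  have hpos : ∀ k : ℕ, 0 < ‖z + k‖ := fun k => norm_pos_iff.mpr (hne k)
  obtain ⟨N, hN⟩ := exists_nat_ge (2 * ‖z‖ + 1)
  -- beyond `N` the constant `2` suffices; the finitely many earlier ratios are added up
  refine ⟨2 + ∑ i ∈ range N, ((i : ℝ) + 1) / ‖z + i‖, by positivity, fun k => ?_⟩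
  rw [← div_le_iff₀ (hpos k)]
  by_cases hk : k < N
  · have := single_le_sum (f := fun i : ℕ => ((i : ℝ) + 1) / ‖z + i‖)
      (fun i _ => by positivity) (mem_range.mpr hk)
    linarith
  · have hs : 0 ≤ ∑ i ∈ range N, ((i : ℝ) + 1) / ‖z + i‖ := by positivity
    have hk' : (N : ℝ) ≤ k := by exact_mod_cast not_lt.mp hk
    have : ((k : ℝ) + 1) / ‖z + k‖ ≤ 2 := by
      rw [div_le_iff₀ (hpos k)]
      have h := norm_sub_le (z + k) z
      simp only [add_sub_cancel_left, Complex.norm_natCast] at h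
      linarith
    linarith

lemma D_factor (a b x : ℂ) : D a b x = (x + a) * (x - a) * (x + b) * (x - b) := by
  unfold D; ring

lemma exists_D_bound (α a b : ℂ)
    (h1 : ∀ k : ℕ, α + a ≠ -(k : ℂ)) (h2 : ∀ k : ℕ, α - a ≠ -(k : ℂ))
    (h3 : ∀ k : ℕ, α + b ≠ -(k : ℂ)) (h4 : ∀ k : ℕ, α - b ≠ -(k : ℂ)) :
    ∃ C : ℝ, 0 ≤ C ∧ ∀ k : ℕ, ((k : ℝ) + 1) ^ 4 ≤ C * ‖D a b (α + k)‖ := by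
  obtain ⟨C1, p1, H1⟩ := exists_linear_bound _ h1
  obtain ⟨C2, p2, H2⟩ := exists_linear_bound _ h2
  obtain ⟨C3, p3, H3⟩ := exists_linear_bound _ h3
  obtain ⟨C4, p4, H4⟩ := exists_linear_bound _ h4
  refine ⟨C1 * C2 * C3 * C4, by positivity, fun k => ?_⟩
  calc ((k : ℝ) + 1) ^ 4 = ((k : ℝ) + 1) * (k + 1) * (k + 1) * (k + 1) := by ring
    _ ≤ (C1 * ‖α + a + k‖) * (C2 * ‖α - a + k‖) * (C3 * ‖α + b + k‖) * (C4 * ‖α - b + k‖) := by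
      gcongr
      exacts [H1 k, H2 k, H3 k, H4 k]
    _ = C1 * C2 * C3 * C4 * ‖D a b (α + k)‖ := by
      rw [D_factor, norm_mul, norm_mul, norm_mul, add_right_comm α a, add_right_comm α b,
        sub_add_eq_add_sub, sub_add_eq_add_sub]
      ring

lemma exists_prod_bound (α a b : ℂ) {K : ℝ} (hK : 0 ≤ K)
    (H : ∀ k : ℕ, ((k : ℝ) + 1) ^ 4 ≤ K * ‖D a b (α + k)‖) (n m : ℕ) :
    ∃ C : ℝ, 0 ≤ C ∧ ∀ k : ℕ,
      ((k : ℝ) + 1) ^ 4 ≤ C * ‖∏ j ∈ range (m + 1), D a b (α + k + n + j)‖ := by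
  have H' : ∀ k j : ℕ, ((k : ℝ) + n + j + 1) ^ 4 ≤ K * ‖D a b (α + k + n + j)‖ := by
    intro k j
    have := H (k + n + j)
    push_cast at this
    simpa only [add_assoc] using this
  induction m with
  | zero =>
    refine ⟨K, hK, fun k => ?_⟩
    rw [zero_add, prod_range_one]
    refine le_trans ?_ (H' k 0)
    gcongr
    push_cast
    have : (0 : ℝ) ≤ n := by positivity
    linarith
  | succ m ih =>
    obtain ⟨C, hC, h⟩ := ih
    refine ⟨C * K, by positivity, fun k => ?_⟩
    rw [prod_range_succ, norm_mul]
    have h1 : (1 : ℝ) ≤ K * ‖D a b (α + k + n + (m + 1 : ℕ))‖ := by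
      refine le_trans (one_le_pow₀ ?_) (H' k (m + 1))
      have : (0 : ℝ) ≤ (k : ℝ) + n + (m + 1 : ℕ) := by positivity
      linarith
    calc ((k : ℝ) + 1) ^ 4 = ((k : ℝ) + 1) ^ 4 * 1 := by ring
      _ ≤ _ := mul_le_mul (h k) h1 zero_le_one (by positivity)
      _ = _ := by ring

lemma norm_le_norm_add_real (y : ℂ) (t : ℝ) (hy : 0 ≤ y.re) (ht : 0 ≤ t) : ‖y‖ ≤ ‖y + t‖ := by
  rw [← sq_le_sq₀ (norm_nonneg _) (norm_nonneg _), Complex.sq_norm, Complex.sq_norm,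
    Complex.normSq_apply, Complex.normSq_apply]
  simp only [Complex.add_re, Complex.ofReal_re, Complex.add_im, Complex.ofReal_im, add_zero]
  nlinarith [mul_nonneg hy ht]

lemma norm_D_le (a b x : ℂ) (t : ℝ) (ht : 0 ≤ t) (hx : ‖a‖ + ‖b‖ ≤ x.re) :
    ‖D a b x‖ ≤ ‖D a b (x + t)‖ := by
  have ha := abs_le.mp (Complex.abs_re_le_norm a)
  have hb := abs_le.mp (Complex.abs_re_le_norm b)
  have := norm_nonneg a
  have := norm_nonneg b
  rw [D_factor, D_factor]
  simp only [norm_mul]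
  have k1 := norm_le_norm_add_real (x + a) t (by simp only [Complex.add_re]; linarith) ht
  have k2 := norm_le_norm_add_real (x - a) t (by simp only [Complex.sub_re]; linarith) ht
  have k3 := norm_le_norm_add_real (x + b) t (by simp only [Complex.add_re]; linarith) ht
  have k4 := norm_le_norm_add_real (x - b) t (by simp only [Complex.sub_re]; linarith) ht
  rw [add_right_comm] at k1 k3
  rw [sub_add_eq_add_sub] at k2 k4
  gcongr

lemma norm_coeff_le (a b x : ℂ) (r : ℝ) (hr : 0 ≤ r) (hx : r + 2 * (‖a‖ + ‖b‖) ≤ x.re) :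
    ‖((r : ℂ) + a + b) * (r + a - b) * (r - a + b) * (r - a - b)‖ ≤ ‖D a b x‖ := by
  have ha := abs_le.mp (Complex.abs_re_le_norm a)
  have hb := abs_le.mp (Complex.abs_re_le_norm b)
  have := norm_nonneg a
  have := norm_nonneg b
  have hr' : ‖(r : ℂ)‖ = r := by rw [Complex.norm_real, Real.norm_of_nonneg hr]
  rw [D_factor]
  simp only [norm_mul]
  have m1 : ‖(r : ℂ) + a + b‖ ≤ r + ‖a‖ + ‖b‖ := by
    refine (norm_add₃_le).trans ?_; rw [hr']
  have m2 : ‖(r : ℂ) + a - b‖ ≤ r + ‖a‖ + ‖b‖ := by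
    rw [sub_eq_add_neg]; refine (norm_add₃_le).trans ?_; rw [hr', norm_neg]
  have m3 : ‖(r : ℂ) - a + b‖ ≤ r + ‖a‖ + ‖b‖ := by
    rw [sub_eq_add_neg]; refine (norm_add₃_le).trans ?_; rw [hr', norm_neg]
  have m4 : ‖(r : ℂ) - a - b‖ ≤ r + ‖a‖ + ‖b‖ := by
    rw [sub_eq_add_neg, sub_eq_add_neg]
    refine (norm_add₃_le).trans ?_; rw [hr', norm_neg, norm_neg]
  have k1 := (Complex.re_le_norm (x + a))
  have k2 := (Complex.re_le_norm (x - a))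
  have k3 := (Complex.re_le_norm (x + b))
  have k4 := (Complex.re_le_norm (x - b))
  simp only [Complex.add_re, Complex.sub_re] at k1 k2 k3 k4
  gcongr <;> linarith

/-- For `n` large, uniformly in the right half-plane `-‖α‖ ≤ re x`, the factor `U` at least halves
from `n` to `n + 1`: the four linear factors gained by `c` are dominated by `D (x+2n+2)`, the
exchange of `D (x+n)` for `D (x+2n+1)` only helps, and `(n+1)/(2(2n+1)) ≤ 1/2`. -/
lemma U_halves (a b α x : ℂ) (n : ℕ) (hn : ‖α‖ + 2 * (‖a‖ + ‖b‖) ≤ n) (hx : -‖α‖ ≤ x.re)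
    (D_ne : ∀ k : ℕ, D a b (x + k) ≠ 0) :
    ‖U a b (n + 1) x‖ ≤ 1 / 2 * ‖U a b n x‖ := by
  have hd0 : D a b (x + n) ≠ 0 := D_ne n
  have hd1 : D a b (x + 2 * n + 1) ≠ 0 := by
    have := D_ne (2 * n + 1); push_cast at this; rwa [← add_assoc] at this
  have hd2 : D a b (x + 2 * n + 2) ≠ 0 := by
    have := D_ne (2 * n + 2); push_cast at this; rwa [← add_assoc] at this
  have hP : P a b n x ≠ 0 := by
    unfold P
    refine prod_ne_zero_iff.mpr fun j _ => ?_
    have := D_ne (n + j); push_cast at this; rwa [← add_assoc] at this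
  have hPs : P a b n (x + 1) = P a b n x * D a b (x + 2 * n + 1) / D a b (x + n) := by
    rw [eq_div_iff hd0, mul_comm, ← P_mul']
  have h2 := two_n_add_one_ne n
  have hA := norm_nonneg a
  have hB := norm_nonneg b
  have hα := norm_nonneg α
  have key : U a b (n + 1) x = -((n + 1) / (2 * (2 * n + 1))) *
      (D a b (x + n) / D a b (x + 2 * n + 1)) *
      (((n + 1 + a + b) * (n + 1 + a - b) * (n + 1 - a + b) * (n + 1 - a - b)) /
        D a b (x + 2 * n + 2)) * U a b n x := by
    unfold U
    rw [P_succ, hPs, c_succ]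
    field_simp
  have b1 : ‖-(((n : ℂ) + 1) / (2 * (2 * n + 1)))‖ ≤ 1 / 2 := by
    have e : -(((n : ℂ) + 1) / (2 * (2 * n + 1))) =
        ((-(((n : ℝ) + 1) / (2 * (2 * n + 1))) : ℝ) : ℂ) := by push_cast; rfl
    rw [e, Complex.norm_real, norm_neg, Real.norm_of_nonneg (by positivity),
      div_le_div_iff₀ (by positivity) (by positivity)]
    have : (0 : ℝ) ≤ n := by positivity
    linarith
  have b2 : ‖D a b (x + n) / D a b (x + 2 * n + 1)‖ ≤ 1 := by
    rw [norm_div]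
    refine div_le_one_of_le₀ ?_ (norm_nonneg _)
    have := norm_D_le a b (x + n) ((n : ℝ) + 1) (by positivity) (by
      simp only [Complex.add_re, Complex.natCast_re]; linarith)
    have e : x + 2 * n + 1 = x + n + (((n : ℝ) + 1 : ℝ) : ℂ) := by push_cast; ring
    rwa [e]
  have b3 : ‖(((n : ℂ) + 1 + a + b) * (n + 1 + a - b) * (n + 1 - a + b) * (n + 1 - a - b)) /
        D a b (x + 2 * n + 2)‖ ≤ 1 := by
    rw [norm_div]
    refine div_le_one_of_le₀ ?_ (norm_nonneg _)
    have := norm_coeff_le a b (x + 2 * n + 2) ((n : ℝ) + 1) (by positivity) (by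
      simp; linarith)
    push_cast at this
    exact this
  rw [key, norm_mul, norm_mul, norm_mul]
  calc _ ≤ 1 / 2 * 1 * 1 * ‖U a b n x‖ := by gcongr
    _ = _ := by ring

/-- Geometric decay in `n` and quartic decay in `k`, simultaneously. -/
lemma U_bound (α a b : ℂ) {K : ℝ} (hK : 0 ≤ K)
    (H : ∀ k : ℕ, ((k : ℝ) + 1) ^ 4 ≤ K * ‖D a b (α + k)‖) (D_ne : ∀ k : ℕ, D a b (α + k) ≠ 0) :
    ∃ C : ℝ, 0 ≤ C ∧ ∀ n k : ℕ, ‖U a b n (α + k)‖ * ((k : ℝ) + 1) ^ 4 ≤ C * (1 / 2) ^ n := by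
  have D_ne' : ∀ k j : ℕ, D a b (α + k + j) ≠ 0 := fun k j => by
    have := D_ne (k + j); push_cast at this; rwa [← add_assoc] at this
  have hb : ∀ n : ℕ, ∃ C : ℝ, 0 ≤ C ∧ ∀ k : ℕ, ‖U a b n (α + k)‖ * ((k : ℝ) + 1) ^ 4 ≤ C := by
    intro n
    obtain ⟨C, hC, h⟩ := exists_prod_bound α a b hK H n n
    refine ⟨‖c a b n‖ * C, by positivity, fun k => ?_⟩
    have hP : 0 < ‖P a b n (α + k)‖ := by
      refine norm_pos_iff.mpr (prod_ne_zero_iff.mpr fun j _ => ?_)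
      have := D_ne' k (n + j); push_cast at this; rwa [← add_assoc] at this
    have hk : ((k : ℝ) + 1) ^ 4 ≤ C * ‖P a b n (α + k)‖ := h k
    rw [U, norm_div, div_mul_eq_mul_div, div_le_iff₀ hP, mul_assoc]
    gcongr
  choose B hB0 hB using hb
  obtain ⟨N, hN⟩ := exists_nat_ge (‖α‖ + 2 * (‖a‖ + ‖b‖))
  have hsum : 0 ≤ ∑ i ∈ range (N + 1), B i * 2 ^ i :=
    sum_nonneg fun i _ => mul_nonneg (hB0 i) (by positivity)
  refine ⟨∑ i ∈ range (N + 1), B i * 2 ^ i, hsum, ?_⟩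
  have small : ∀ n ≤ N, ∀ k : ℕ, ‖U a b n (α + k)‖ * ((k : ℝ) + 1) ^ 4 ≤
      (∑ i ∈ range (N + 1), B i * 2 ^ i) * (1 / 2) ^ n := by
    intro n hn k
    have h1 := single_le_sum (f := fun i : ℕ => B i * 2 ^ i)
      (fun i _ => mul_nonneg (hB0 i) (by positivity)) (mem_range.mpr (Nat.lt_succ_of_le hn))
    calc _ ≤ B n := hB n k
      _ = B n * 2 ^ n * (1 / 2) ^ n := by rw [mul_assoc, ← mul_pow]; norm_num
      _ ≤ _ := by gcongr
  intro n k
  rcases le_total n N with hn | hn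
  · exact small n hn k
  · induction n, hn using Nat.le_induction with
    | base => exact small N le_rfl k
    | succ n hn ih =>
      have hn' : (N : ℝ) ≤ n := by exact_mod_cast hn
      have hre : -‖α‖ ≤ (α + k).re := by
        have := (abs_le.mp (Complex.abs_re_le_norm α)).1
        have hk : (0 : ℝ) ≤ k := by positivity
        simp only [Complex.add_re, Complex.natCast_re]
        linarith
      have h := U_halves a b α (α + k) n (hN.trans hn') hre (D_ne' k)
      calc _ ≤ 1 / 2 * ‖U a b n (α + k)‖ * ((k : ℝ) + 1) ^ 4 := by gcongr
        _ = 1 / 2 * (‖U a b n (α + k)‖ * ((k : ℝ) + 1) ^ 4) := by ring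
        _ ≤ 1 / 2 * ((∑ i ∈ range (N + 1), B i * 2 ^ i) * (1 / 2) ^ n) := by gcongr
        _ = _ := by ring

/-- The power of `k + 1` is weakened from `3` to `2`, so that one convergent series serves `T` and
`E` alike. -/
lemma T_bound (α a b : ℂ) {C : ℝ}
    (hU : ∀ n k : ℕ, ‖U a b n (α + k)‖ * ((k : ℝ) + 1) ^ 4 ≤ C * (1 / 2) ^ n) (n k : ℕ) :
    ‖T a b n (α + k)‖ ≤
      (2 * ‖α‖ + 3) * C * (((n : ℝ) + 1) * (1 / 2) ^ n) * (1 / ((k : ℝ) + 1) ^ 2) := by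
  have hlin : ‖2 * (α + k) + 3 * (n : ℂ)‖ ≤ (2 * ‖α‖ + 3) * ((n : ℝ) + 1) * ((k : ℝ) + 1) := by
    have h : ‖2 * (α + k) + 3 * (n : ℂ)‖ ≤ 2 * (‖α‖ + k) + 3 * n := by
      refine (norm_add_le _ _).trans ?_
      rw [norm_mul, norm_mul]
      have := norm_add_le α (k : ℂ)
      simp only [Complex.norm_natCast, Complex.norm_ofNat] at *
      linarith
    refine h.trans ?_
    have := norm_nonneg α
    have hn : (0 : ℝ) ≤ n := by positivity
    have hk : (0 : ℝ) ≤ k := by positivity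
    nlinarith [mul_nonneg hn hk, mul_nonneg this (mul_nonneg hn hk), mul_nonneg this hn,
      mul_nonneg this hk]
  have hk1 : (1 : ℝ) ≤ (k : ℝ) + 1 := by
    have hk : (0 : ℝ) ≤ k := by positivity
    linarith
  rw [T, norm_mul, mul_one_div, le_div_iff₀ (by positivity)]
  calc _ ≤ (2 * ‖α‖ + 3) * ((n : ℝ) + 1) * ((k : ℝ) + 1) * ‖U a b n (α + k)‖ *
        ((k : ℝ) + 1) ^ 2 := by gcongr
    _ = (2 * ‖α‖ + 3) * ((n : ℝ) + 1) * (‖U a b n (α + k)‖ * ((k : ℝ) + 1) ^ 3) := by ring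
    _ ≤ (2 * ‖α‖ + 3) * ((n : ℝ) + 1) * (‖U a b n (α + k)‖ * ((k : ℝ) + 1) ^ 4) := by
      gcongr
      norm_num
    _ ≤ (2 * ‖α‖ + 3) * ((n : ℝ) + 1) * (C * (1 / 2) ^ n) :=
      mul_le_mul_of_nonneg_left (hU n k) (by positivity)
    _ = _ := by ring

lemma q_bound (α a b : ℂ) (n k : ℕ) :
    ‖q a b n (α + k)‖ ≤
      (13 + 12 * (1 + ‖α‖) ^ 2 + ‖a‖ ^ 2 + ‖b‖ ^ 2) * ((n : ℝ) + 1) ^ 2 * ((k : ℝ) + 1) ^ 2 := by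
  have hn : (1 : ℝ) ≤ (n : ℝ) + 1 := by
    have : (0 : ℝ) ≤ n := by positivity
    linarith
  have hk : (1 : ℝ) ≤ (k : ℝ) + 1 := by
    have : (0 : ℝ) ≤ k := by positivity
    linarith
  have hα : (1 : ℝ) ≤ 1 + ‖α‖ := by
    have := norm_nonneg α
    linarith
  have hN : ‖(n : ℂ) + 1‖ = (n : ℝ) + 1 := by
    rw [← Nat.cast_succ, Complex.norm_natCast]; push_cast; rfl
  have hx : ‖1 - (α + k)‖ ≤ (1 + ‖α‖) * ((k : ℝ) + 1) := by
    have h1 := norm_sub_le 1 (α + k)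
    have h2 := norm_add_le α (k : ℂ)
    simp only [Complex.norm_natCast, norm_one] at h1 h2
    nlinarith [mul_nonneg (norm_nonneg α) (Nat.cast_nonneg (α := ℝ) k)]
  have h : ‖q a b n (α + k)‖ ≤ 13 * ((n : ℝ) + 1) ^ 2 + 10 * ((n : ℝ) + 1) * ‖1 - (α + k)‖ +
      2 * ‖1 - (α + k)‖ ^ 2 + ‖a‖ ^ 2 + ‖b‖ ^ 2 := by
    unfold q
    refine (norm_sub_le _ _).trans ?_
    rw [norm_pow]
    gcongr
    refine (norm_sub_le _ _).trans ?_
    rw [norm_pow]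
    gcongr
    refine (norm_add_le _ _).trans ?_
    gcongr
    · refine (norm_sub_le _ _).trans ?_
      simp only [norm_mul, norm_pow, hN, Complex.norm_ofNat]
      exact le_rfl
    · simp only [norm_mul, norm_pow, Complex.norm_ofNat]
      exact le_rfl
  refine h.trans ?_
  have hz := norm_nonneg (1 - (α + k))
  generalize ‖1 - (α + k)‖ = z at *
  set u := (n : ℝ) + 1
  set v := (k : ℝ) + 1
  set w := 1 + ‖α‖
  have hu2 : 1 ≤ u ^ 2 := one_le_pow₀ hn
  have hv2 : 1 ≤ v ^ 2 := one_le_pow₀ hk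
  have huv : 1 ≤ u ^ 2 * v ^ 2 := one_le_mul_of_one_le_of_one_le hu2 hv2
  have t1 : u ^ 2 ≤ u ^ 2 * v ^ 2 := le_mul_of_one_le_right (by positivity) hv2
  have t2 : u * z ≤ w ^ 2 * (u ^ 2 * v ^ 2) := by
    calc u * z ≤ u * (w * v) := by gcongr
      _ = (w * (u * v)) ^ 1 := by ring
      _ ≤ (w * (u * v)) ^ 2 := by
        gcongr
        · exact one_le_mul_of_one_le_of_one_le hα (one_le_mul_of_one_le_of_one_le hn hk)
        · norm_num
      _ = _ := by ring
  have t3 : z ^ 2 ≤ w ^ 2 * (u ^ 2 * v ^ 2) := by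
    calc z ^ 2 ≤ (w * v) ^ 2 := by gcongr
      _ = w ^ 2 * v ^ 2 := by ring
      _ ≤ _ := by
        gcongr
        exact le_mul_of_one_le_left (by positivity) hu2
  have t4 : ‖a‖ ^ 2 ≤ ‖a‖ ^ 2 * (u ^ 2 * v ^ 2) := le_mul_of_one_le_right (by positivity) huv
  have t5 : ‖b‖ ^ 2 ≤ ‖b‖ ^ 2 * (u ^ 2 * v ^ 2) := le_mul_of_one_le_right (by positivity) huv
  linarith

lemma E_bound (α a b : ℂ) {C : ℝ}
    (hU : ∀ n k : ℕ, ‖U a b n (α + k)‖ * ((k : ℝ) + 1) ^ 4 ≤ C * (1 / 2) ^ n) (n k : ℕ) :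
    ‖E a b n (α + k)‖ ≤
      (13 + 12 * (1 + ‖α‖) ^ 2 + ‖a‖ ^ 2 + ‖b‖ ^ 2) * C * (((n : ℝ) + 1) ^ 2 * (1 / 2) ^ n) *
        (1 / ((k : ℝ) + 1) ^ 2) := by
  have hq := q_bound α a b n k
  have hU' : ‖U a b n (α + k + 1)‖ * ((k : ℝ) + 1) ^ 4 ≤ C * (1 / 2) ^ n := by
    have h := hU n (k + 1)
    push_cast at h
    rw [← add_assoc] at h
    refine le_trans ?_ h
    gcongr
    linarith
  have hden : 1 ≤ ‖2 * (2 * (n : ℂ) + 1)‖ := by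
    have e : 2 * (2 * (n : ℂ) + 1) = ((2 * (2 * n + 1) : ℕ) : ℂ) := by push_cast; rfl
    rw [e, Complex.norm_natCast]
    exact_mod_cast (by omega : 1 ≤ 2 * (2 * n + 1))
  rw [E, norm_mul, norm_div, mul_one_div, le_div_iff₀ (by positivity)]
  calc _ ≤ ‖q a b n (α + k)‖ * ‖U a b n (α + k + 1)‖ * ((k : ℝ) + 1) ^ 2 := by
        gcongr
        exact div_le_self (norm_nonneg _) hden
    _ ≤ ((13 + 12 * (1 + ‖α‖) ^ 2 + ‖a‖ ^ 2 + ‖b‖ ^ 2) * ((n : ℝ) + 1) ^ 2 * ((k : ℝ) + 1) ^ 2) *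
        ‖U a b n (α + k + 1)‖ * ((k : ℝ) + 1) ^ 2 := by gcongr
    _ = (13 + 12 * (1 + ‖α‖) ^ 2 + ‖a‖ ^ 2 + ‖b‖ ^ 2) * ((n : ℝ) + 1) ^ 2 *
        (‖U a b n (α + k + 1)‖ * ((k : ℝ) + 1) ^ 4) := by ring
    _ ≤ (13 + 12 * (1 + ‖α‖) ^ 2 + ‖a‖ ^ 2 + ‖b‖ ^ 2) * ((n : ℝ) + 1) ^ 2 *
        (C * (1 / 2) ^ n) := by gcongr
    _ = _ := by ring

lemma summable_sq : Summable fun k : ℕ => 1 / ((k : ℝ) + 1) ^ 2 := by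
  have h := (summable_nat_add_iff (f := fun k : ℕ => 1 / (k : ℝ) ^ 2) 1).mpr
    (Real.summable_one_div_nat_pow.mpr one_lt_two)
  simpa using h

lemma summable_geom_sq : Summable fun n : ℕ => ((n : ℝ) + 1) ^ 2 * (1 / 2) ^ n := by
  have h := (summable_nat_add_iff (f := fun n : ℕ => (n : ℝ) ^ 2 * (1 / 2 : ℝ) ^ n) 1).mpr
    (summable_pow_mul_geometric_of_norm_lt_one 2 (by norm_num))
  have h2 := h.mul_left 2
  refine h2.congr fun n => ?_
  push_cast
  ring

end MarkovWZ

/-! ### Summation of the telescoping relation -/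

open MarkovWZ in
theorem stmt14 (α a b : ℂ)
    (h1 : ∀ k : ℕ, α + a ≠ -(k : ℂ)) (h2 : ∀ k : ℕ, α - a ≠ -(k : ℂ))
    (h3 : ∀ k : ℕ, α + b ≠ -(k : ℂ)) (h4 : ∀ k : ℕ, α - b ≠ -(k : ℂ)) :
    ∑' k : ℕ,
        ((k : ℂ) + α) / ((((k : ℂ) + α) ^ 2 - a ^ 2) * (((k : ℂ) + α) ^ 2 - b ^ 2))
      = (1 / 2) * ∑' n : ℕ,
          (-1 : ℂ) ^ n *
            (poch (1 + a + b) n * poch (1 + a - b) n * poch (1 - a + b) n *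
              poch (1 - a - b) n) *
            (poch (α + a) n * poch (α - a) n * poch (α + b) n * poch (α - b) n) /
            (((n : ℂ) + 1) * (Nat.choose (2 * (n + 1)) (n + 1) : ℂ) *
              (poch (α + a) (2 * (n + 1)) * poch (α - a) (2 * (n + 1)) *
                poch (α + b) (2 * (n + 1)) * poch (α - b) (2 * (n + 1)))) *
            (2 * (2 * ((n : ℂ) + 1) - 1) * (3 * ((n : ℂ) + 1) + 2 * α - 3) *
                ((2 * ((n : ℂ) + 1) + α - 1) ^ 2 - a ^ 2) *
                ((2 * ((n : ℂ) + 1) + α - 1) ^ 2 - b ^ 2) +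
              ((((n : ℂ) + 1) + α - 1) ^ 2 - a ^ 2) *
                ((((n : ℂ) + 1) + α - 1) ^ 2 - b ^ 2) *
                (13 * ((n : ℂ) + 1) ^ 2 - 10 * ((n : ℂ) + 1) * (1 - α) +
                  2 * (1 - α) ^ 2 - a ^ 2 - b ^ 2)) := by
  have D_ne : ∀ k : ℕ, D a b (α + k) ≠ 0 := by
    intro k
    have g : ∀ z : ℂ, (∀ k : ℕ, z ≠ -(k : ℂ)) → z + k ≠ 0 :=
      fun z hz h => hz k (eq_neg_of_add_eq_zero_left h)
    have e : D a b (α + k) = (α + a + k) * (α - a + k) * (α + b + k) * (α - b + k) := by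
      unfold D; ring
    rw [e]
    exact mul_ne_zero (mul_ne_zero (mul_ne_zero (g _ h1) (g _ h2)) (g _ h3)) (g _ h4)
  obtain ⟨K, hK, H⟩ := exists_D_bound α a b h1 h2 h3 h4
  obtain ⟨C, hC, hU⟩ := U_bound α a b hK H D_ne
  have hT := T_bound α a b hU
  have hE := E_bound α a b hU
  have sT : ∀ n, Summable fun k : ℕ => T a b n (α + k) := fun n =>
    Summable.of_norm_bounded (summable_sq.mul_left _) (hT n)
  have sE : ∀ n, Summable fun k : ℕ => E a b n (α + k) := fun n =>
    Summable.of_norm_bounded (summable_sq.mul_left _) (hE n)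
  -- the relation `T_succ`, summed over `k`
  have step : ∀ n, ∑' k : ℕ, T a b (n + 1) (α + k) =
      ∑' k : ℕ, T a b n (α + k) - (T a b n α + E a b n α) := by
    intro n
    have hrec : ∀ k : ℕ, T a b (n + 1) (α + k) =
        T a b n (α + (k + 1 : ℕ)) + E a b n (α + (k + 1 : ℕ)) - E a b n (α + k) := by
      intro k
      rw [T_succ a b (α + k) n fun j => by
        have := D_ne (k + j); push_cast at this; rwa [← add_assoc] at this]
      push_cast
      rw [add_assoc α]
    have sT1 := (summable_nat_add_iff 1).mpr (sT n)
    have sE1 := (summable_nat_add_iff 1).mpr (sE n)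
    rw [tsum_congr hrec, (sT1.add sE1).tsum_sub (sE n), sT1.tsum_add sE1,
      (sT n).tsum_eq_zero_add, (sE n).tsum_eq_zero_add]
    simp only [Nat.cast_zero, add_zero]
    ring
  have partial_sum : ∀ N, ∑ n ∈ Finset.range N, (T a b n α + E a b n α) =
      ∑' k : ℕ, T a b 0 (α + k) - ∑' k : ℕ, T a b N (α + k) := by
    intro N
    induction N with
    | zero => simp
    | succ N ih => rw [Finset.sum_range_succ, ih, step]; ring
  have lim0 : Tendsto (fun N : ℕ => ∑' k : ℕ, T a b N (α + k)) atTop (𝓝 0) := by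
    have hbound : ∀ N : ℕ, ‖∑' k : ℕ, T a b N (α + k)‖ ≤
        (2 * ‖α‖ + 3) * C * (∑' k : ℕ, 1 / ((k : ℝ) + 1) ^ 2) *
          (((N : ℝ) + 1) ^ 2 * (1 / 2) ^ N) := by
      intro N
      refine (tsum_of_norm_bounded (summable_sq.mul_left _).hasSum (hT N)).trans ?_
      rw [tsum_mul_left]
      have hs : 0 ≤ ∑' k : ℕ, 1 / ((k : ℝ) + 1) ^ 2 := tsum_nonneg fun k => by positivity
      have hN : (N : ℝ) + 1 ≤ ((N : ℝ) + 1) ^ 2 := by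
        have : (0 : ℝ) ≤ N := by positivity
        nlinarith
      calc _ = (2 * ‖α‖ + 3) * C * (∑' k : ℕ, 1 / ((k : ℝ) + 1) ^ 2) *
          (((N : ℝ) + 1) * (1 / 2) ^ N) := by ring
        _ ≤ _ := by gcongr
    refine squeeze_zero_norm hbound ?_
    have h := summable_geom_sq.tendsto_atTop_zero.const_mul
      ((2 * ‖α‖ + 3) * C * (∑' k : ℕ, 1 / ((k : ℝ) + 1) ^ 2))
    rwa [mul_zero] at h
  have sR : Summable fun n : ℕ => T a b n α + E a b n α := by
    refine Summable.add ?_ ?_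
    · refine Summable.of_norm_bounded (summable_geom_sq.mul_left ((2 * ‖α‖ + 3) * C)) fun n => ?_
      have h := hT n 0
      simp only [Nat.cast_zero, add_zero, zero_add, one_pow, div_one, mul_one] at h
      refine h.trans ?_
      have hN : (n : ℝ) + 1 ≤ ((n : ℝ) + 1) ^ 2 := by
        have : (0 : ℝ) ≤ n := by positivity
        nlinarith
      gcongr
    · refine Summable.of_norm_bounded (summable_geom_sq.mul_left
        ((13 + 12 * (1 + ‖α‖) ^ 2 + ‖a‖ ^ 2 + ‖b‖ ^ 2) * C)) fun n => ?_
      have h := hE n 0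
      simpa only [Nat.cast_zero, add_zero, zero_add, one_pow, div_one, mul_one] using h
  have main : ∑' n : ℕ, (T a b n α + E a b n α) = ∑' k : ℕ, T a b 0 (α + k) := by
    refine tendsto_nhds_unique sR.hasSum.tendsto_sum_nat ?_
    simp only [partial_sum]
    simpa using lim0.const_sub (∑' k : ℕ, T a b 0 (α + k))
  rw [← tsum_mul_left]
  simp only [fun n => term_eq a b α n D_ne]
  rw [main]
  refine tsum_congr fun k => ?_
  simp [T, U, c, P, poch, D]
  ring
end

section
/- For every positive integer n, define A_n = ∑_{k=0}^{n−1} (−1)^{n−1−k} C(2k, k)^5 (205k² + 160k + 32). Then both of the following hold: A_n = 16n · C(2n, n) · ∑_{k=0}^{n−1} C(n+k−1, k)^4 (2k+n), and A_n = 8n² · C(2n, n)² · ∑_{k=0}^{n−1} (−1)^k C(2n−1, n+k) C(2n−k−2, n−k−1)². -/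
/-!
Both right-hand sides satisfy the recurrence `X (n+1) + X n = C(2n,n)^5 (205n² + 160n + 32)` of `A`,
and all three quantities equal `32` at `n = 1`.

For each right-hand side `∑_{k<n} F(n,k)`, the sum `F(n+1,k) + F(n,k)` telescopes in `k`
(a Wilf–Zeilberger argument). Writing `n = m + 1`, the certificates, up to factors free of `k`, are
`C(m+k,k)^4 k^4 (2k² + 6nk + 5n²)` for the first sum (`cert_one`), and, after the reflection
`j = n-1-k`, `(-1)^j C(2n+1,j) C(m+j,j)² j³ ((21n+8)j + 30n² + 11n)` for the second (`cert_two`).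
Evaluating the certificates at the upper end and adding the extra term `F(n+1,n)` gives
the recurrence.
-/

/-- `A n = ∑_{k=0}^{n-1} (-1)^{n-1-k} C(2k,k)^5 (205k² + 160k + 32)`. -/
def A (n : ℕ) : ℤ :=
  ∑ k ∈ Finset.range n,
    (-1) ^ (n - 1 - k) * (Nat.choose (2 * k) k : ℤ) ^ 5 *
      (205 * (k : ℤ) ^ 2 + 160 * k + 32)

lemma A_succ (n : ℕ) :
    A (n + 1) = (Nat.choose (2 * n) n : ℤ) ^ 5 * (205 * (n : ℤ) ^ 2 + 160 * n + 32) - A n := by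
  unfold A
  rw [Finset.sum_range_succ, sub_eq_add_neg, ← Finset.sum_neg_distrib, add_comm]
  congr 1
  · simp
  · refine Finset.sum_congr rfl fun k hk => ?_
    have hk := Finset.mem_range.1 hk
    rw [show n + 1 - 1 - k = (n - 1 - k) + 1 by omega, pow_succ]
    ring

/-- Absorption in the lower index, over `ℤ` so that it also covers `n < k`. -/
lemma choose_absorb (n k : ℕ) :
    ((k : ℤ) + 1) * (Nat.choose n (k + 1) : ℤ) = ((n : ℤ) - k) * (Nat.choose n k : ℤ) := by
  rcases le_or_gt k n with h | h
  · have := Nat.choose_succ_right_eq n k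
    zify [h] at this
    linear_combination this
  · simp [Nat.choose_eq_zero_of_lt h, Nat.choose_eq_zero_of_lt (Nat.lt_succ_of_lt h)]

/-- Absorption in the upper index, over `ℤ` so that it also covers `n < k`. -/
lemma choose_upper (n k : ℕ) :
    ((n : ℤ) + 1 - k) * (Nat.choose (n + 1) k : ℤ) = ((n : ℤ) + 1) * (Nat.choose n k : ℤ) := by
  cases k with
  | zero => simp
  | succ k =>
    have h := choose_absorb n k
    rw [Nat.choose_succ_succ]
    push_cast
    linear_combination -h

lemma diag_next (m k : ℕ) :
    ((k : ℤ) + 1) * (Nat.choose (m + (k + 1)) (k + 1) : ℤ)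
      = ((m : ℤ) + 1 + k) * (Nat.choose (m + k) k : ℤ) := by
  have h := Nat.add_one_mul_choose_eq (m + k) k
  zify at h
  rw [show m + (k + 1) = m + k + 1 by ring]
  linear_combination -h

lemma diag_upper (m k : ℕ) :
    ((m : ℤ) + 1) * (Nat.choose (m + 1 + k) k : ℤ)
      = ((m : ℤ) + 1 + k) * (Nat.choose (m + k) k : ℤ) := by
  have h := choose_upper (m + k) k
  rw [show m + 1 + k = m + k + 1 by ring]
  push_cast at h
  linear_combination h

/-- The telescoped form of the combination `F(n+1,k) + F(n,k)` for the first sum, `n = m + 1`,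
up to the factor `16 C(2n,n) / n^4`. -/
lemma cert_one (m K : ℕ) :
    ((m : ℤ) + 1) ^ 4 * ∑ k ∈ Finset.range K,
      (2 * (2 * m + 3) * (Nat.choose (m + 1 + k) k : ℤ) ^ 4 * (2 * k + m + 2)
        + (m + 1) * (Nat.choose (m + k) k : ℤ) ^ 4 * (2 * k + m + 1))
    = (Nat.choose (m + K) K : ℤ) ^ 4 * K ^ 4
        * (2 * K ^ 2 + 6 * (m + 1) * K + 5 * (m + 1) ^ 2) := by
  induction K with
  | zero => simp
  | succ K ih =>
    rw [Finset.sum_range_succ, mul_add, ih]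
    have h1 := congrArg (· ^ 4) (diag_next m K)
    have h2 := congrArg (· ^ 4) (diag_upper m K)
    simp only [mul_pow] at h1 h2
    push_cast
    linear_combination (2 * (2 * (m : ℤ) + 3) * (2 * K + m + 2)) * h2
      - (2 * ((K : ℤ) + 1) ^ 2 + 6 * (m + 1) * (K + 1) + 5 * (m + 1) ^ 2) * h1

/-- The telescoped form of the combination `F(n+1,j) + F(n,j)` for the reflected second sum,
`n = m + 1`, up to the factor `(-1)^n 4 C(2n,n)² / (n² (2n+1))`. -/
lemma cert_two (m K : ℕ) :
    2 * ((m : ℤ) + 1) ^ 2 * (2 * m + 3) * ∑ j ∈ Finset.range K, (-1) ^ j *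
      (4 * (2 * m + 3) ^ 2 * (Nat.choose (2 * m + 3) j : ℤ) * (Nat.choose (m + 1 + j) j : ℤ) ^ 2
        - (m + 1) ^ 2 * (Nat.choose (2 * m + 1) j : ℤ) * (Nat.choose (m + j) j : ℤ) ^ 2)
    = -(-1) ^ K * (Nat.choose (2 * m + 3) K : ℤ) * (Nat.choose (m + K) K : ℤ) ^ 2 * K ^ 3
        * ((21 * m + 29) * K + 30 * (m + 1) ^ 2 + 11 * (m + 1)) := by
  induction K with
  | zero => simp
  | succ K ih =>
    rw [Finset.sum_range_succ, mul_add, ih]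
    have h1 := congrArg (· ^ 2) (diag_next m K)
    have h2 := congrArg (· ^ 2) (diag_upper m K)
    have h3 := choose_absorb (2 * m + 3) K
    have h4 := choose_upper (2 * m + 1) K
    have h5 := choose_upper (2 * m + 2) K
    simp only [mul_pow] at h1 h2
    push_cast at h3 h4 h5 ⊢
    rw [show 2 * m + 1 + 1 = 2 * m + 2 by ring] at h4
    rw [show 2 * m + 2 + 1 = 2 * m + 3 by ring] at h5
    -- Here `y, x` are the diagonal binomials for `m + 1, m`, and `w, u, z` those with upper
    -- index `2m + 3, 2m + 2, 2m + 1`; primes mark `K + 1`.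
    generalize (Nat.choose (m + 1 + K) K : ℤ) = y at *
    generalize (Nat.choose (m + (K + 1)) (K + 1) : ℤ) = x' at *
    generalize (Nat.choose (m + K) K : ℤ) = x at *
    generalize (Nat.choose (2 * m + 3) (K + 1) : ℤ) = w' at *
    generalize (Nat.choose (2 * m + 3) K : ℤ) = w at *
    generalize (Nat.choose (2 * m + 2) K : ℤ) = u at *
    generalize (Nat.choose (2 * m + 1) K : ℤ) = z at *
    rw [pow_succ (-1 : ℤ) K]
    generalize ((-1 : ℤ)) ^ K = s
    have h6 : (2 * (m : ℤ) + 3) * (2 * m + 2) * z = (2 * m + 3 - K) * (2 * m + 2 - K) * w := by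
      linear_combination (-(2 * (m : ℤ) + 3)) * h4 - (2 * m + 2 - K) * h5
    have h7 : ((K : ℤ) + 1) ^ 3 * w' * x' ^ 2
        = (2 * m + 3 - K) * w * ((m + 1 + K) ^ 2 * x ^ 2) := by
      linear_combination ((K : ℤ) + 1) * w' * h1 + (m + 1 + K) ^ 2 * x ^ 2 * h3
    linear_combination s * (8 * (2 * (m : ℤ) + 3) ^ 3 * w) * h2
      - s * ((m : ℤ) + 1) ^ 3 * x ^ 2 * h6
      - s * ((21 * (m : ℤ) + 29) * (K + 1) + 30 * (m + 1) ^ 2 + 11 * (m + 1)) * h7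

lemma central_next (m : ℕ) :
    ((m : ℤ) + 2) * (Nat.choose (2 * (m + 2)) (m + 2) : ℤ)
      = 2 * (2 * m + 3) * (Nat.choose (2 * (m + 1)) (m + 1) : ℤ) := by
  have h := Nat.succ_mul_centralBinom_succ (m + 1)
  simp only [Nat.centralBinom] at h
  zify at h
  linear_combination h

lemma central_half (m : ℕ) :
    (Nat.choose (2 * (m + 1)) (m + 1) : ℤ) = 2 * (Nat.choose (m + (m + 1)) (m + 1) : ℤ) := by
  have h := Nat.choose_succ_succ (2 * m + 1) m
  have h2 : (2 * m + 1).choose m = (2 * m + 1).choose (m + 1) :=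
    (Nat.choose_symm_half m).symm
  rw [show 2 * (m + 1) = 2 * m + 1 + 1 by ring, h, show m + (m + 1) = 2 * m + 1 by ring, h2]
  push_cast
  ring

lemma first_formula (m : ℕ) :
    A (m + 1) = 16 * (m + 1) * (Nat.choose (2 * (m + 1)) (m + 1) : ℤ) *
        ∑ k ∈ Finset.range (m + 1), (Nat.choose (m + k) k : ℤ) ^ 4 * (2 * k + m + 1) := by
  induction m with
  | zero => simp [A]
  | succ m ih =>
    rw [A_succ, ih]
    have hc := cert_one m (m + 1)
    have h1 := central_next m
    have h2 := central_half m
    rw [Finset.sum_range_succ _ (m + 1)]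
    simp only [mul_assoc, Finset.sum_add_distrib, ← Finset.mul_sum] at hc
    simp only [← mul_assoc] at hc
    rw [show m + 1 + (m + 1) = 2 * (m + 1) by ring]
    have e : ∀ k : ℕ, (2 * (k : ℤ) + ((m + 1 : ℕ) : ℤ) + 1) = 2 * k + m + 2 := by
      intro k; push_cast; ring
    simp only [e, show m + 1 + 1 = m + 2 from rfl]
    push_cast at hc ⊢
    have hn : ((m : ℤ) + 1) ^ 4 ≠ 0 := by positivity
    generalize ∑ k ∈ Finset.range (m + 1), (Nat.choose (m + k) k : ℤ) ^ 4 * (2 * k + m + 1) = S at *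
    generalize ∑ k ∈ Finset.range (m + 1),
      (Nat.choose (m + 1 + k) k : ℤ) ^ 4 * (2 * k + m + 2) = T at *
    generalize (Nat.choose (m + (m + 1)) (m + 1) : ℤ) = x at *
    generalize (Nat.choose (2 * (m + 2)) (m + 2) : ℤ) = c' at *
    generalize (Nat.choose (2 * (m + 1)) (m + 1) : ℤ) = c at *
    have hc' : 2 * (2 * (m : ℤ) + 3) * T + (m + 1) * S = x ^ 4 * (13 * (m + 1) ^ 2) := by
      apply mul_left_cancel₀ hn
      linear_combination hc
    subst h2
    linear_combination (-16 * (T + (2 * x) ^ 4 * (3 * (m : ℤ) + 4))) * h1 - 32 * x * hc'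

lemma second_formula (m : ℕ) :
    A (m + 1) = 8 * ((m : ℤ) + 1) ^ 2 * (Nat.choose (2 * (m + 1)) (m + 1) : ℤ) ^ 2 * ((-1) ^ m *
        ∑ j ∈ Finset.range (m + 1), (-1) ^ j *
          ((Nat.choose (2 * m + 1) j : ℤ) * (Nat.choose (m + j) j : ℤ) ^ 2)) := by
  induction m with
  | zero => simp [A]
  | succ m ih =>
    rw [A_succ, ih]
    have hc := cert_two m (m + 1)
    have h1 := central_next m
    have h2 := central_half m
    have h3 := choose_upper (2 * (m + 1)) (m + 1)
    rw [Finset.sum_range_succ _ (m + 1)]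
    simp only [mul_sub, Finset.sum_sub_distrib] at hc
    have e1 : ∀ j : ℕ, (-1 : ℤ) ^ j * (4 * (2 * m + 3) ^ 2 * (Nat.choose (2 * m + 3) j : ℤ)
        * (Nat.choose (m + 1 + j) j : ℤ) ^ 2) = 4 * (2 * m + 3) ^ 2 *
        ((-1 : ℤ) ^ j * ((Nat.choose (2 * m + 3) j : ℤ)
        * (Nat.choose (m + 1 + j) j : ℤ) ^ 2)) := by intro j; ring
    have e2 : ∀ j : ℕ, (-1 : ℤ) ^ j * ((m + 1) ^ 2 * (Nat.choose (2 * m + 1) j : ℤ)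
        * (Nat.choose (m + j) j : ℤ) ^ 2) = (m + 1) ^ 2 *
        ((-1 : ℤ) ^ j * ((Nat.choose (2 * m + 1) j : ℤ)
        * (Nat.choose (m + j) j : ℤ) ^ 2)) := by intro j; ring
    simp only [e1, e2, ← Finset.mul_sum] at hc
    rw [show m + 1 + (m + 1) = 2 * (m + 1) by ring]
    rw [show 2 * (m + 1) + 1 = 2 * m + 3 by ring] at *
    simp only [show m + 1 + 1 = m + 2 from rfl]
    push_cast at hc h3 ⊢
    generalize ∑ j ∈ Finset.range (m + 1), (-1 : ℤ) ^ j *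
      ((Nat.choose (2 * m + 1) j : ℤ) * (Nat.choose (m + j) j : ℤ) ^ 2) = S at *
    generalize ∑ j ∈ Finset.range (m + 1), (-1 : ℤ) ^ j *
      ((Nat.choose (2 * m + 3) j : ℤ) * (Nat.choose (m + 1 + j) j : ℤ) ^ 2) = T at *
    generalize (Nat.choose (m + (m + 1)) (m + 1) : ℤ) = x at *
    generalize (Nat.choose (2 * (m + 2)) (m + 2) : ℤ) = c' at *
    generalize (Nat.choose (2 * (m + 1)) (m + 1) : ℤ) = c at *
    generalize (Nat.choose (2 * m + 3) (m + 1) : ℤ) = w at *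
    have hs : ((-1 : ℤ) ^ m) ^ 2 = 1 := by rw [← pow_mul, mul_comm, pow_mul]; simp
    rw [pow_succ (-1 : ℤ) m] at hc ⊢
    generalize (-1 : ℤ) ^ m = s at *
    have hn : 2 * ((m : ℤ) + 1) ^ 2 * (2 * m + 3) ≠ 0 := by positivity
    have hm : (m : ℤ) + 2 ≠ 0 := by positivity
    subst h2
    have hc' : ((m : ℤ) + 2) * (4 * (2 * (m : ℤ) + 3) ^ 2 * T - (m + 1) ^ 2 * S)
        = s * (x ^ 3 * ((m + 1) ^ 2 * (51 * m + 70))) := by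
      apply mul_left_cancel₀ hn
      linear_combination ((m : ℤ) + 2) * hc + s * x ^ 2 * (m + 1) ^ 3 *
        ((21 * m + 29) * (m + 1) + 30 * (m + 1) ^ 2 + 11 * (m + 1)) * h3
    have h1' := congrArg (· ^ 2) h1
    simp only [mul_pow] at h1'
    apply mul_left_cancel₀ hm
    linear_combination 8 * ((m : ℤ) + 2) * s * (T - s * w * (2 * x) ^ 2) * h1'
      + 32 * x ^ 2 * s * hc'
      - 32 * (2 * (m : ℤ) + 3) ^ 2 * (2 * x) ^ 4 * h3
      + (32 * x ^ 5 * (m + 1) ^ 2 * (51 * m + 70)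
        - 32 * (m + 2) * (2 * (m : ℤ) + 3) ^ 2 * (2 * x) ^ 4 * w) * hs

theorem stmt16 (n : ℕ) (hn : 0 < n) :
    (A n = 16 * n * (Nat.choose (2 * n) n : ℤ) *
        ∑ k ∈ Finset.range n, (Nat.choose (n + k - 1) k : ℤ) ^ 4 * (2 * k + n)) ∧
    (A n = 8 * (n : ℤ) ^ 2 * (Nat.choose (2 * n) n : ℤ) ^ 2 *
        ∑ k ∈ Finset.range n,
          (-1) ^ k * (Nat.choose (2 * n - 1) (n + k) : ℤ) *
            (Nat.choose (2 * n - k - 2) (n - k - 1) : ℤ) ^ 2) := by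
  obtain ⟨m, rfl⟩ : ∃ m, n = m + 1 := ⟨n - 1, by omega⟩
  constructor
  · rw [first_formula]
    push_cast
    congr 1
    refine Finset.sum_congr rfl fun k _ => ?_
    rw [show m + 1 + k - 1 = m + k by omega]
    ring
  · rw [second_formula]
    push_cast
    congr 1
    rw [← Finset.sum_range_reflect, Finset.mul_sum]
    refine Finset.sum_congr rfl fun k hk => ?_
    have hk := Finset.mem_range.1 hk
    obtain ⟨j, rfl⟩ : ∃ j, m = k + j := ⟨m - k, by omega⟩
    rw [show k + j + 1 - 1 - k = j by omega, show 2 * (k + j + 1) - 1 = 2 * (k + j) + 1 by omega,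
      show 2 * (k + j + 1) - k - 2 = k + j + j by omega, show k + j + 1 - k - 1 = j by omega,
      Nat.choose_symm_of_eq_add (show 2 * (k + j) + 1 = (k + j + 1 + k) + j by ring)]
    have hs : ((-1 : ℤ) ^ j) ^ 2 = 1 := by rw [← pow_mul, mul_comm, pow_mul]; simp
    rw [pow_add]
    linear_combination ((-1 : ℤ) ^ k * (Nat.choose (2 * (k + j) + 1) j : ℤ)
      * (Nat.choose (k + j + j) j : ℤ) ^ 2) * hs
end

section
/- For every positive integer n, the integer A_n = ∑_{k=0}^{n−1} (−1)^{n−1−k} C(2k, k)^5 (205k² + 160k + 32) is divisible by 8n² C(2n, n)², and the quotient a_n = A_n / (8n² C(2n, n)²) is a positive integer. -/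
/-- The absolute value of the `k`-th term of the sum for `a_{m+1}`. -/
def absTerm (m k : ℕ) : ℤ := (Nat.choose (2 * m + 1) k : ℤ) * (Nat.choose (m + k) k : ℤ) ^ 2

/-- The alternating partial sum `∑_{k=0}^{K} (-1)^(K-k) absTerm m k`, normalised so that its last
term has sign `+`; `partialSum m m` is the quotient `a_{m+1}`. -/
def partialSum (m : ℕ) : ℕ → ℤ
  | 0 => absTerm m 0
  | K + 1 => absTerm m (K + 1) - partialSum m K

lemma absTerm_lt_succ {m k : ℕ} (hk : k < m) : absTerm m k < absTerm m (k + 1) := by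
  have h1 : Nat.choose (2 * m + 1) k ≤ Nat.choose (2 * m + 1) (k + 1) :=
    Nat.choose_le_succ_of_lt_half_left (by omega)
  have h2 : Nat.choose (m + k) k < Nat.choose (m + (k + 1)) (k + 1) := by
    rw [← add_assoc, Nat.choose_succ_succ']
    have : 0 < Nat.choose (m + k) (k + 1) := Nat.choose_pos (by omega)
    omega
  have h3 : 0 < Nat.choose (2 * m + 1) (k + 1) := Nat.choose_pos (by omega)
  unfold absTerm
  have h4 : Nat.choose (2 * m + 1) k * Nat.choose (m + k) k ^ 2 <
      Nat.choose (2 * m + 1) (k + 1) * Nat.choose (m + (k + 1)) (k + 1) ^ 2 :=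
    Nat.mul_lt_mul_of_le_of_lt h1 (Nat.pow_lt_pow_left h2 (by norm_num)) h3
  exact_mod_cast h4

lemma partialSum_pos_and_le (m K : ℕ) (hK : K ≤ m) :
    0 < partialSum m K ∧ partialSum m K ≤ absTerm m K := by
  induction K with
  | zero => simp [partialSum, absTerm]
  | succ K ih =>
    have := ih (by omega)
    have := absTerm_lt_succ (m := m) (k := K) (by omega)
    simp only [partialSum]
    constructor <;> linarith

lemma absTerm_succ_right {m k : ℕ} (hk : k < m) :
    ((k : ℤ) + 1) ^ 3 * absTerm m (k + 1) = (2 * m + 1 - k) * (m + k + 1) ^ 2 * absTerm m k := by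
  have h1 : (Nat.choose (2 * m + 1) (k + 1) : ℤ) * (k + 1)
      = Nat.choose (2 * m + 1) k * (2 * m + 1 - k) := by
    have := Nat.choose_succ_right_eq (2 * m + 1) k
    zify [show k ≤ 2 * m + 1 by omega] at this
    exact this
  have h2 : ((m : ℤ) + k + 1) * Nat.choose (m + k) k
      = Nat.choose (m + (k + 1)) (k + 1) * (k + 1) := by
    exact_mod_cast Nat.add_one_mul_choose_eq (m + k) k
  unfold absTerm
  calc _ = ((Nat.choose (2 * m + 1) (k + 1) : ℤ) * (k + 1)) *
        (Nat.choose (m + (k + 1)) (k + 1) * (k + 1)) ^ 2 := by ring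
    _ = _ := by rw [h1, ← h2]; ring

lemma absTerm_succ_left {m k : ℕ} (hk : k ≤ m) :
    (2 * (m : ℤ) + 3 - k) * (2 * m + 2 - k) * (m + 1) * absTerm (m + 1) k
      = 2 * (2 * m + 3) * (m + 1 + k) ^ 2 * absTerm m k := by
  have h1 : (Nat.choose (2 * m + 1) k : ℤ) * (2 * m + 2)
      = Nat.choose (2 * m + 2) k * (2 * m + 2 - k) := by
    have := Nat.choose_mul_succ_eq (2 * m + 1) k
    zify [show k ≤ 2 * m + 1 + 1 by omega] at this
    linear_combination this
  have h2 : (Nat.choose (2 * m + 2) k : ℤ) * (2 * m + 3)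
      = Nat.choose (2 * (m + 1) + 1) k * (2 * m + 3 - k) := by
    have := Nat.choose_mul_succ_eq (2 * m + 2) k
    zify [show k ≤ 2 * m + 2 + 1 by omega] at this
    rw [show 2 * (m + 1) + 1 = 2 * m + 2 + 1 by ring]
    linear_combination this
  have h3 : (Nat.choose (m + k) k : ℤ) * (m + k + 1)
      = Nat.choose (m + 1 + k) k * (m + 1) := by
    have := Nat.choose_mul_succ_eq (m + k) k
    rw [show m + k + 1 - k = m + 1 by omega, show m + k + 1 = m + 1 + k by ring] at this
    zify at this
    linear_combination this
  have h4 : (m : ℤ) + 1 ≠ 0 := by positivity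
  unfold absTerm
  apply mul_left_cancel₀ h4
  calc _ = (2 * (m : ℤ) + 2 - k) * (Nat.choose (2 * (m + 1) + 1) k * (2 * m + 3 - k)) *
        (Nat.choose (m + 1 + k) k * (m + 1)) ^ 2 := by ring
    _ = (2 * (m : ℤ) + 3) * (Nat.choose (2 * m + 2) k * (2 * m + 2 - k)) *
        (Nat.choose (m + 1 + k) k * (m + 1)) ^ 2 := by rw [← h2]; ring
    _ = _ := by rw [← h1, ← h3]; ring

/-- The telescoped identity. The linear factor in `K` on the right is the numerator of the
Wilf–Zeilberger certificate for the summand. -/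
lemma partialSum_telescope (m K : ℕ) (hK : K ≤ m) :
    ((m : ℤ) + 1) * (2 * m + 2 - K) *
        (4 * (2 * m + 3) ^ 2 * partialSum (m + 1) K - (m + 1) ^ 2 * partialSum m K)
      = ((30 * m + 41) * (m + 1) + (21 * m + 29) * (K + 1)) * (m + 1 + K) ^ 2 * absTerm m K := by
  induction K with
  | zero => simp [partialSum, absTerm]; ring
  | succ K ih =>
    have ih := ih (by omega)
    have h1 := absTerm_succ_left hK
    have h2 := absTerm_succ_right (m := m) (k := K) (by omega)
    have hK' : (K : ℤ) + 1 ≤ m := by exact_mod_cast hK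
    have h3 : (2 * (m : ℤ) + 2 - K) ≠ 0 := by linarith
    simp only [partialSum]
    push_cast at h1 ⊢
    apply mul_left_cancel₀ h3
    linear_combination (4 * (2 * (m : ℤ) + 3) ^ 2) * h1 - (2 * (m : ℤ) + 1 - K) * ih
      + ((30 * (m : ℤ) + 41) * (m + 1) + (21 * m + 29) * (K + 1)) * h2

lemma partialSum_diag_recurrence (m : ℕ) :
    8 * (4 * (2 * (m : ℤ) + 3) ^ 2 * partialSum (m + 1) (m + 1) + (m + 1) ^ 2 * partialSum m m)
      = (Nat.choose (2 * (m + 1)) (m + 1) : ℤ) ^ 3 *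
        (205 * (m + 1) ^ 2 + 160 * (m + 1) + 32) := by
  have h := partialSum_telescope m m le_rfl
  -- Every binomial coefficient involved is a rational multiple of `C(2m, m)`.
  have h1 : ((m : ℤ) + 1) * Nat.choose (2 * (m + 1)) (m + 1)
      = 2 * (2 * m + 1) * Nat.choose (2 * m) m := by
    have := Nat.succ_mul_centralBinom_succ m
    simp only [Nat.centralBinom] at this
    exact_mod_cast this
  have h2 (j : ℕ) : (Nat.choose (2 * j + 1) j : ℤ) * (j + 1)
      = Nat.choose (2 * j) j * (2 * j + 1) := by
    have := Nat.choose_mul_succ_eq (2 * j) j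
    rw [show 2 * j + 1 - j = j + 1 by omega] at this
    exact_mod_cast this.symm
  have h3 := h2 (m + 1)
  have h2 := h2 m
  simp only [partialSum, absTerm] at h ⊢
  rw [show m + 1 + (m + 1) = 2 * (m + 1) by ring]
  rw [show m + m = 2 * m by ring] at h
  push_cast at h3 h ⊢
  generalize (Nat.choose (2 * (m + 1)) (m + 1) : ℤ) = c at *
  generalize (Nat.choose (2 * (m + 1) + 1) (m + 1) : ℤ) = d at *
  generalize (Nat.choose (2 * m + 1) m : ℤ) = e at *
  generalize (Nat.choose (2 * m) m : ℤ) = x at *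
  have hm : (m : ℤ) + 1 ≠ 0 := by positivity
  have hm2 : (m : ℤ) + 2 ≠ 0 := by positivity
  have he : 2 * e = c := by
    apply mul_left_cancel₀ hm
    linear_combination 2 * h2 - h1
  have hx : 4 * (2 * (m : ℤ) + 1) ^ 2 * x ^ 2 = (m + 1) ^ 2 * c ^ 2 := by
    linear_combination (-(m + 1) * c - 2 * (2 * m + 1) * x) * h1
  have hf : 8 * ((2 * (m : ℤ) + 1) ^ 2 * (e * x ^ 2)) = (m + 1) ^ 2 * c ^ 3 := by
    linear_combination 2 * e * hx + (m + 1) ^ 2 * c ^ 2 * he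
  have hp : ((m : ℤ) + 1) * (m + 2) ≠ 0 := mul_ne_zero hm hm2
  apply mul_left_cancel₀ hp
  linear_combination -8 * h + 32 * (2 * m + 3) ^ 2 * (m + 1) * c ^ 2 * h3
    - ((30 * m + 41) * (m + 1) + (21 * m + 29) * (m + 1)) * hf

lemma A_succ_succ (m : ℕ) :
    A (m + 2) = (Nat.choose (2 * (m + 1)) (m + 1) : ℤ) ^ 5 *
      (205 * (m + 1) ^ 2 + 160 * (m + 1) + 32) - A (m + 1) := by
  have hneg : ∑ k ∈ Finset.range (m + 1), (-1) ^ (m + 2 - 1 - k) *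
      (Nat.choose (2 * k) k : ℤ) ^ 5 * (205 * (k : ℤ) ^ 2 + 160 * k + 32) = - A (m + 1) := by
    unfold A
    rw [← Finset.sum_neg_distrib]
    refine Finset.sum_congr rfl fun k hk => ?_
    have hk := Finset.mem_range.mp hk
    rw [show m + 2 - 1 - k = (m + 1 - 1 - k) + 1 by omega, pow_succ]
    ring
  rw [A, Finset.sum_range_succ, hneg]
  simp
  ring

lemma A_eq_mul_partialSum (m : ℕ) :
    A (m + 1) = 8 * ((m : ℤ) + 1) ^ 2 * (Nat.choose (2 * (m + 1)) (m + 1) : ℤ) ^ 2 *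
      partialSum m m := by
  induction m with
  | zero => decide
  | succ m ih =>
    have h1 : ((m : ℤ) + 2) * Nat.choose (2 * (m + 1 + 1)) (m + 1 + 1)
        = 2 * (2 * m + 3) * Nat.choose (2 * (m + 1)) (m + 1) := by
      have := Nat.succ_mul_centralBinom_succ (m + 1)
      simp only [Nat.centralBinom] at this
      zify at this
      linear_combination this
    have h2 := partialSum_diag_recurrence m
    rw [A_succ_succ, ih]
    push_cast
    calc _ = (8 * (4 * (2 * (m : ℤ) + 3) ^ 2 * partialSum (m + 1) (m + 1)
            + (m + 1) ^ 2 * partialSum m m)) * (Nat.choose (2 * (m + 1)) (m + 1) : ℤ) ^ 2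
          - 8 * ((m : ℤ) + 1) ^ 2 * (Nat.choose (2 * (m + 1)) (m + 1) : ℤ) ^ 2 *
            partialSum m m := by rw [h2]; ring
      _ = 8 * (2 * (2 * m + 3) * Nat.choose (2 * (m + 1)) (m + 1)) ^ 2 *
            partialSum (m + 1) (m + 1) := by ring
      _ = _ := by rw [← h1]; ring

theorem stmt17 (n : ℕ) (hn : 0 < n) :
    ∃ a : ℤ, 0 < a ∧ A n = 8 * (n : ℤ) ^ 2 * (Nat.choose (2 * n) n : ℤ) ^ 2 * a := by
  obtain ⟨m, rfl⟩ : ∃ m, n = m + 1 := ⟨n - 1, by omega⟩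
  refine ⟨partialSum m m, (partialSum_pos_and_le m m le_rfl).1, ?_⟩
  push_cast
  exact A_eq_mul_partialSum m
end

section
/- Let p be an odd prime. (1) If p ≠ 5, then the rational number ∑_{k=0}^{p−1} (205k² + 160k + 32)(−1)^k C(2k, k)^5 − 32p² − 64p³ H_{p−1} has p-adic valuation at least 7, where H_{p−1} = ∑_{k=1}^{p−1} 1/k; equivalently, ∑_{k=0}^{p−1} (205k² + 160k + 32)(−1)^k C(2k, k)^5 ≡ 32p² + 64p³ H_{p−1} (mod p^7). (2) If p > 3, then ∑_{k=0}^{(p−1)/2} (205k² + 160k + 32)(−1)^k C(2k, k)^5 ≡ 32p² (mod p^5). -/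
/-!
The sum has a closed form suited to `p`-adic expansion. A Wilf–Zeilberger pair `(F, G)` with
`F(n, k) = 8 n² C(2n, n)² (-1)^k C(n + k - 1, k)² C(2n - 1, k)` and `G(n, 0) = 0` satisfies
`F(n + 1, n) + G(n, n) = (205 n² + 160 n + 32) (-1)^n C(2n, n)^5`, so summing over the triangle
`k < n` gives (`closed_form`)
`∑_{k<n} (205 k² + 160 k + 32) (-1)^k C(2k, k)^5 = ∑_{k<n} F(n, k)`.

For `n = p` this is `32 p² W² T` with `W = C(2p - 1, p - 1)` and
`T = ∑_{k<p} (-1)^k C(p + k - 1, k)² C(2p - 1, k)`. Write `H_s = ∑_{j=1}^{p-1} j^{-s}`. Then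
`W = ∏ (1 + p/j) = ∏ (1 - p²/j²)` because `∏ (1 - p/j) = 1`, and
`T = 1 + ∑_k p²/k² (1 - 2p/k) ∏_{j<k} (1 + p/j)² (1 - 2p/j)`,
where each factor of the last product is `1 - 3p²/j² - 2p³/j³`. If `p > 5`, then `H_2` and `H_4`
are divisible by `p` and `H_3` by `p²`, whence modulo `p⁵`
`W ≡ 1 - p² H_2` and `T ≡ 1 + p² H_2`, while `2 H_1 ≡ -p H_2` modulo `p⁴`. Therefore
`W² T ≡ 1 - p² H_2 ≡ 1 + 2 p H_1` modulo `p⁵`, which is the first congruence; the case `p = 3` is a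
direct computation. For `p > 3` the divisibility of `H_2` by `p` alone gives `W² T ≡ 1` modulo `p³`,
and the terms with `(p - 1)/2 < k < p` vanish modulo `p⁵`, which gives the second congruence.
-/

/-! ### The Wilf–Zeilberger pair -/

/-- First member `F(n, k) = 8 n² C(2n, n)² (-1)^k C(n + k - 1, k)² C(2n - 1, k)` of the
Wilf–Zeilberger pair, indexed by `m = n - 1` so that no truncated subtraction occurs. -/
def wzF (m k : ℕ) : ℚ :=
  8 * ((m : ℚ) + 1) ^ 2 * (Nat.centralBinom (m + 1) : ℚ) ^ 2 * (-1) ^ k *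
    (Nat.choose (m + k) k : ℚ) ^ 2 * (Nat.choose (2 * m + 1) k : ℚ)

/-- Second member of the Wilf–Zeilberger pair:
`G(n, k) = -F(n, k) k³ (30 n² + 11 n + (21 n + 8) k) / (n³ (2n + 1 - k) (2n - k))` with `n = m + 1`.
The denominator does not vanish in the range `k ≤ n` used below. -/
def wzG (m k : ℕ) : ℚ :=
  -wzF m k * (k : ℚ) ^ 3 *
      (30 * ((m : ℚ) + 1) ^ 2 + 11 * ((m : ℚ) + 1) + (21 * ((m : ℚ) + 1) + 8) * k) /
    (((m : ℚ) + 1) ^ 3 * (2 * ((m : ℚ) + 1) + 1 - k) * (2 * ((m : ℚ) + 1) - k))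

lemma cast_choose_succ_right (n k : ℕ) (h : k ≤ n) :
    (Nat.choose n (k + 1) : ℚ) * (k + 1) = Nat.choose n k * (n - k) := by
  have := Nat.choose_succ_right_eq n k
  rw [← Nat.cast_sub h]
  exact_mod_cast this

lemma cast_choose_succ_left (n k : ℕ) (h : k ≤ n + 1) :
    (Nat.choose (n + 1) k : ℚ) * (n + 1 - k) = (n + 1) * Nat.choose n k := by
  have := Nat.choose_mul_succ_eq n k
  have h2 : ((n + 1 - k : ℕ) : ℚ) = n + 1 - k := by rw [Nat.cast_sub h]; push_cast; ring
  rw [← h2, mul_comm ((n : ℚ) + 1)]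
  exact_mod_cast this.symm

lemma cast_centralBinom_succ (m : ℕ) : (Nat.centralBinom (m + 1 + 1) : ℚ) =
    2 * (2 * (m + 1) + 1) / (m + 2) * Nat.centralBinom (m + 1) := by
  have h : ((m : ℚ) + 1 + 1) * Nat.centralBinom (m + 1 + 1) =
      2 * (2 * (m + 1) + 1) * Nat.centralBinom (m + 1) := by
    exact_mod_cast Nat.succ_mul_centralBinom_succ (m + 1)
  field_simp
  linarith

/-- The rational-function identity behind `wz_step`, in the variables `k` and `d = 2 n - k`. -/
lemma wz_alg (k d c a b s : ℚ) (hn : k + d ≠ 0) (hn2 : k + d + 2 ≠ 0) (hk : k + 1 ≠ 0)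
    (h0 : d ≠ 0) (h1 : d + 1 ≠ 0) (h2 : d - 1 ≠ 0) :
    8 * ((k + d) / 2 + 1) ^ 2 * (2 * (k + d + 1) / ((k + d + 2) / 2) * c) ^ 2 * s *
        (((k + d) / 2 + k) / ((k + d) / 2) * a) ^ 2 *
          ((k + d + 1) * (k + d) / ((d + 1) * d) * b) -
      8 * ((k + d) / 2) ^ 2 * c ^ 2 * s * a ^ 2 * b =
    -(8 * ((k + d) / 2) ^ 2 * c ^ 2 * (s * (-1)) * (((k + d) / 2 + k) / (k + 1) * a) ^ 2 *
          ((d - 1) / (k + 1) * b)) * (k + 1) ^ 3 *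
        (30 * ((k + d) / 2) ^ 2 + 11 * ((k + d) / 2) + (21 * ((k + d) / 2) + 8) * (k + 1)) /
        (((k + d) / 2) ^ 3 * d * (d - 1)) -
      -(8 * ((k + d) / 2) ^ 2 * c ^ 2 * s * a ^ 2 * b) * k ^ 3 *
        (30 * ((k + d) / 2) ^ 2 + 11 * ((k + d) / 2) + (21 * ((k + d) / 2) + 8) * k) /
        (((k + d) / 2) ^ 3 * (d + 1) * d) := by
  field_simp
  ring

/-- The pair relation `F(n + 1, k) - F(n, k) = G(n, k + 1) - G(n, k)`, for `n = m + 1`. -/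
lemma wz_step (m k : ℕ) (hk : k ≤ m) :
    wzF (m + 1) k - wzF m k = wzG m (k + 1) - wzG m k := by
  have hkm : (k : ℚ) ≤ m := by exact_mod_cast hk
  have hm0 : (0 : ℚ) ≤ m := Nat.cast_nonneg m
  have hk0 : (0 : ℚ) ≤ k := Nat.cast_nonneg k
  have hcb := cast_centralBinom_succ m
  have hA1 : (Nat.choose (m + 1 + k) k : ℚ) = (m + 1 + k) / (m + 1) * Nat.choose (m + k) k := by
    have h := cast_choose_succ_left (m + k) k (by omega)
    rw [show m + 1 + k = m + k + 1 by ring]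
    push_cast at h
    field_simp
    linarith
  have hA2 : (Nat.choose (m + (k + 1)) (k + 1) : ℚ) =
      (m + 1 + k) / (k + 1) * Nat.choose (m + k) k := by
    have h := Nat.add_one_mul_choose_eq (m + k) k
    have h : ((m : ℚ) + k + 1) * Nat.choose (m + k) k =
      Nat.choose (m + (k + 1)) (k + 1) * (k + 1) := by exact_mod_cast h
    field_simp
    linarith
  have e1 : (2 * ((m : ℚ) + 1) + 1 - k) ≠ 0 := by linarith
  have e2 : (2 * ((m : ℚ) + 1) - k) ≠ 0 := by linarith
  have e3 : (2 * ((m : ℚ) + 1) - 1 - k) ≠ 0 := by linarith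
  have hB1 : (Nat.choose (2 * (m + 1) + 1) k : ℚ) =
      (2 * (m + 1) + 1) * (2 * (m + 1)) / ((2 * (m + 1) + 1 - k) * (2 * (m + 1) - k)) *
        Nat.choose (2 * m + 1) k := by
    have h1 := cast_choose_succ_left (2 * (m + 1)) k (by omega)
    have h2 := cast_choose_succ_left (2 * m + 1) k (by omega)
    rw [show 2 * m + 1 + 1 = 2 * (m + 1) by ring] at h2
    push_cast at h1 h2
    rw [div_mul_eq_mul_div, eq_div_iff (mul_ne_zero e1 e2)]
    linear_combination (2 * ((m : ℚ) + 1) - k) * h1 + (2 * ((m : ℚ) + 1) + 1) * h2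
  have hB2 : (Nat.choose (2 * m + 1) (k + 1) : ℚ) =
      (2 * (m + 1) - 1 - k) / (k + 1) * Nat.choose (2 * m + 1) k := by
    have h := cast_choose_succ_right (2 * m + 1) k (by omega)
    push_cast at h
    field_simp
    linarith
  unfold wzG
  unfold wzF
  rw [hcb, hA1, hA2, hB1, hB2]
  have key := wz_alg k (2 * (m + 1) - k) (Nat.centralBinom (m + 1)) (Nat.choose (m + k) k)
    (Nat.choose (2 * m + 1) k) ((-1) ^ k) (by linarith) (by linarith) (by linarith) (by linarith)
    (by linarith) (by linarith)
  rw [show (k : ℚ) + (2 * (m + 1) - k) = 2 * (m + 1) by ring,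
    show (2 * ((m : ℚ) + 1)) / 2 = m + 1 by ring,
    show (2 * ((m : ℚ) + 1) + 2) / 2 = m + 2 by ring,
    show 2 * ((m : ℚ) + 1) - k + 1 = 2 * (m + 1) + 1 - k by ring,
    show 2 * ((m : ℚ) + 1) - k - 1 = 2 * (m + 1) - 1 - k by ring] at key
  push_cast
  rw [show (2 * ((m : ℚ) + 1) + 1 - (k + 1)) = 2 * (m + 1) - k by ring,
    show (2 * ((m : ℚ) + 1) - (k + 1)) = 2 * (m + 1) - 1 - k by ring, pow_succ (-1 : ℚ) k]
  exact key

lemma wz_sum (m j : ℕ) (hj : j ≤ m + 1) :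
    ∑ k ∈ Finset.range j, (wzF (m + 1) k - wzF m k) = wzG m j := by
  induction j with
  | zero => simp [wzG]
  | succ j ih =>
    rw [Finset.sum_range_succ, ih (by omega), wz_step m j (by omega)]
    ring

/-- With `n = m + 1`, the diagonal contribution `F(n + 1, n) + G(n, n)` is the `n`-th summand of the
sum under study. -/
lemma wz_diag (m : ℕ) :
    wzF (m + 1) (m + 1) + wzG m (m + 1) =
      (205 * ((m + 1 : ℕ) : ℚ) ^ 2 + 160 * ((m + 1 : ℕ) : ℚ) + 32) * (-1) ^ (m + 1) *
        (Nat.choose (2 * (m + 1)) (m + 1) : ℚ) ^ 5 := by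
  have hm0 : (0 : ℚ) ≤ m := Nat.cast_nonneg m
  have hcb := cast_centralBinom_succ m
  have hA1 : m + 1 + (m + 1) = 2 * (m + 1) := by ring
  have hA2 : m + (m + 1) = 2 * m + 1 := by ring
  have hB1 : (Nat.choose (2 * (m + 1) + 1) (m + 1) : ℚ) =
      (2 * (m + 1) + 1) / (m + 2) * Nat.choose (2 * (m + 1)) (m + 1) := by
    have h1 := cast_choose_succ_left (2 * (m + 1)) (m + 1) (by omega)
    push_cast at h1
    field_simp
    linarith
  have hB2 : (Nat.choose (2 * m + 1) (m + 1) : ℚ) =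
      1 / 2 * Nat.choose (2 * (m + 1)) (m + 1) := by
    have h2 := cast_choose_succ_left (2 * m + 1) (m + 1) (by omega)
    rw [show 2 * m + 1 + 1 = 2 * (m + 1) by ring] at h2
    push_cast at h2
    have h3 : ((m : ℚ) + 1) ≠ 0 := by positivity
    apply mul_left_cancel₀ h3
    linarith
  unfold wzG
  unfold wzF
  rw [hA1, hA2, hcb, hB1, hB2]
  simp only [Nat.centralBinom]
  push_cast
  rw [show (2 * ((m : ℚ) + 1) + 1 - (m + 1)) = m + 2 by ring,
    show (2 * ((m : ℚ) + 1) - (m + 1)) = m + 1 by ring,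
    show ((m : ℚ) + 1 + 1) = m + 2 by ring]
  field_simp
  ring

/-- Induction on `m`: passing from `∑_{k < n} F(n, k)` to `∑_{k ≤ n} F(n + 1, k)` adds `F(n + 1, n)`
and the telescoped `G(n, n)`. -/
lemma closed_form (m : ℕ) :
    ∑ k ∈ Finset.range (m + 1), (205 * (k : ℚ) ^ 2 + 160 * k + 32) * (-1) ^ k *
        (Nat.choose (2 * k) k : ℚ) ^ 5 = ∑ k ∈ Finset.range (m + 1), wzF m k := by
  induction m with
  | zero => norm_num [wzF, Nat.centralBinom]
  | succ m ih =>
    rw [Finset.sum_range_succ, ih, ← wz_diag, Finset.sum_range_succ (fun k => wzF (m + 1) k),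
      ← wz_sum m (m + 1) le_rfl, Finset.sum_sub_distrib]
    ring

/-! ### Truncated expansions in a commutative ring -/

section expansions
variable {R : Type*} [CommRing R] (π : R) (r : ℕ → R)

/-- The factor is `1 - 3 π² r² - 2 π³ r³`: the linear terms cancel. -/
lemma prod_cubic_dvd (k : ℕ) :
    π ^ 3 ∣ ∏ j ∈ Finset.range k, ((1 + π * r j) ^ 2 * (1 - 2 * π * r j)) -
      (1 - 3 * π ^ 2 * ∑ j ∈ Finset.range k, r j ^ 2) := by
  induction k with
  | zero => simp
  | succ k ih =>
    obtain ⟨c, hc⟩ := ih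
    rw [Finset.prod_range_succ, Finset.sum_range_succ, sub_eq_iff_eq_add.mp hc]
    generalize ∑ j ∈ Finset.range k, r j ^ 2 = s
    exact ⟨c * (1 + π * r k) ^ 2 * (1 - 2 * π * r k) - 2 * r k ^ 3 + 9 * π * s * r k ^ 2 +
      6 * π ^ 2 * s * r k ^ 3, by ring⟩

/-- Expansion of `∏ (1 - π² r²)` modulo `π⁵`. The factor `2` clears the denominator of the second
elementary symmetric function when it is written through power sums. -/
lemma prod_quad_dvd (k : ℕ) :
    π ^ 5 ∣ 2 * ∏ j ∈ Finset.range k, ((1 + π * r j) * (1 - π * r j)) -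
      (2 - 2 * π ^ 2 * ∑ j ∈ Finset.range k, r j ^ 2 +
        π ^ 4 * ((∑ j ∈ Finset.range k, r j ^ 2) ^ 2 - ∑ j ∈ Finset.range k, r j ^ 4)) := by
  induction k with
  | zero => simp
  | succ k ih =>
    obtain ⟨c, hc⟩ := ih
    rw [Finset.prod_range_succ, Finset.sum_range_succ, Finset.sum_range_succ, ← mul_assoc,
      sub_eq_iff_eq_add.mp hc]
    generalize ∑ j ∈ Finset.range k, r j ^ 2 = s
    generalize ∑ j ∈ Finset.range k, r j ^ 4 = t
    exact ⟨c * ((1 + π * r k) * (1 - π * r k)) - π * (s ^ 2 - t) * r k ^ 2, by ring⟩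

lemma two_mul_sum_sum (n : ℕ) :
    2 * ∑ k ∈ Finset.range n, r k ^ 2 * ∑ j ∈ Finset.range k, r j ^ 2 =
      (∑ j ∈ Finset.range n, r j ^ 2) ^ 2 - ∑ j ∈ Finset.range n, r j ^ 4 := by
  induction n with
  | zero => simp
  | succ n ih =>
    rw [Finset.sum_range_succ, mul_add, ih, Finset.sum_range_succ (fun j => r j ^ 2),
      Finset.sum_range_succ (fun j => r j ^ 4)]
    ring

lemma sum_expansion_dvd (n : ℕ) :
    π ^ 5 ∣ 2 * (1 + ∑ k ∈ Finset.range n, π ^ 2 * r k ^ 2 * (1 - 2 * π * r k) *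
        ∏ j ∈ Finset.range k, ((1 + π * r j) ^ 2 * (1 - 2 * π * r j))) -
      (2 + 2 * π ^ 2 * ∑ k ∈ Finset.range n, r k ^ 2 -
        4 * π ^ 3 * ∑ k ∈ Finset.range n, r k ^ 3 -
        3 * π ^ 4 * ((∑ j ∈ Finset.range n, r j ^ 2) ^ 2 - ∑ j ∈ Finset.range n, r j ^ 4)) := by
  rw [← two_mul_sum_sum]
  have h : π ^ 5 ∣ ∑ k ∈ Finset.range n, (π ^ 2 * r k ^ 2 * (1 - 2 * π * r k) *
        ∏ j ∈ Finset.range k, ((1 + π * r j) ^ 2 * (1 - 2 * π * r j)) -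
      (π ^ 2 * r k ^ 2 - 2 * π ^ 3 * r k ^ 3 -
        3 * π ^ 4 * (r k ^ 2 * ∑ j ∈ Finset.range k, r j ^ 2))) := by
    refine Finset.dvd_sum fun k _ => ?_
    obtain ⟨c, hc⟩ := prod_cubic_dvd π r k
    rw [sub_eq_iff_eq_add.mp hc]
    generalize ∑ j ∈ Finset.range k, r j ^ 2 = s
    exact ⟨c * r k ^ 2 * (1 - 2 * π * r k) + 6 * s * r k ^ 3, by ring⟩
  simp only [Finset.sum_sub_distrib, ← Finset.mul_sum] at h
  obtain ⟨c, hc⟩ := h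
  exact ⟨2 * c, by linear_combination 2 * hc⟩

end expansions

/-! ### Power sums of reciprocals in the p-adic integers -/

section padic
variable {p : ℕ} [hp : Fact p.Prime]

/-- The inverse of `j + 1` in `ℤ_[p]`; it is a genuine inverse for `j < p - 1`
(see `mul_recip`), and only such `j` are used. -/
noncomputable def recip (p : ℕ) [Fact p.Prime] (j : ℕ) : ℤ_[p] := PadicInt.inv ((j : ℤ_[p]) + 1)

/-- The generalized harmonic number `∑_{k=1}^{p-1} k^{-s}` as a `p`-adic integer. -/
noncomputable def powSum (p : ℕ) [Fact p.Prime] (s : ℕ) : ℤ_[p] :=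
  ∑ j ∈ Finset.range (p - 1), recip p j ^ s

lemma mul_recip {j : ℕ} (hj : j < p - 1) : ((j : ℤ_[p]) + 1) * recip p j = 1 := by
  apply PadicInt.mul_inv
  rw [show ((j : ℤ_[p]) + 1) = ((j + 1 : ℕ) : ℤ_[p]) by push_cast; ring,
    PadicInt.norm_natCast_eq_one_iff]
  exact Nat.coprime_of_lt_prime (by omega) (by omega) hp.out

/-- Modulo `p`, inverse powers `x^{-s}` are powers `x^{p-1-s}`, and power sums over `ZMod p` with
exponent below `p - 1` vanish. -/
lemma p_dvd_powSum {s : ℕ} (h0 : 0 < s) (hs : s < p - 1) : (p : ℤ_[p]) ∣ powSum p s := by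
  rw [← Ideal.mem_span_singleton, ← PadicInt.maximalIdeal_eq_span_p, ← PadicInt.ker_toZMod,
    RingHom.mem_ker, powSum, map_sum]
  have h1 : ∀ j ∈ Finset.range (p - 1),
      PadicInt.toZMod (recip p j ^ s) = ((j + 1 : ℕ) : ZMod p) ^ (p - 1 - s) := by
    intro j hj
    have hj' : j < p - 1 := Finset.mem_range.mp hj
    have h := congrArg PadicInt.toZMod (mul_recip hj')
    simp only [map_mul, map_add, map_natCast, map_one] at h
    have hne : ((j + 1 : ℕ) : ZMod p) ≠ 0 := by
      intro h0
      push_cast at h0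
      rw [h0, zero_mul] at h
      exact zero_ne_one h
    have hf : ((j + 1 : ℕ) : ZMod p) ^ (p - 1) = 1 := ZMod.pow_card_sub_one_eq_one hne
    rw [map_pow]
    apply mul_left_cancel₀ (pow_ne_zero s hne)
    rw [← pow_add, Nat.add_sub_cancel' hs.le, hf, ← mul_pow]
    push_cast
    rw [h, one_pow]
  rw [Finset.sum_congr rfl h1]
  have h2 : ∑ x : ZMod p, x ^ (p - 1 - s) = 0 :=
    FiniteField.sum_pow_lt_card_sub_one (ZMod p) _ (by rw [ZMod.card]; omega)
  rw [← h2]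
  have h3 : ∑ x : ZMod p, x ^ (p - 1 - s) =
      ∑ j ∈ Finset.range p, ((j : ℕ) : ZMod p) ^ (p - 1 - s) := by
    refine Finset.sum_bij' (fun x _ => x.val) (fun j _ => (j : ZMod p)) ?_ ?_ ?_ ?_ ?_
    · intro x _
      exact Finset.mem_range.mpr (ZMod.val_lt x)
    · intro j _
      exact Finset.mem_univ _
    · intro x _
      exact ZMod.natCast_zmod_val x
    · intro j hj
      exact ZMod.val_cast_of_lt (Finset.mem_range.mp hj)
    · intro x _
      rw [ZMod.natCast_zmod_val]
  have h4 : Finset.range p = Finset.range (p - 1 + 1) := by congr 1; omega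
  rw [h3, h4, Finset.sum_range_succ']
  rw [Nat.cast_zero, zero_pow (by omega), add_zero]

/-- `1/a + 1/(p - a) = p · 1/a · 1/(p - a)` for `a = j + 1`. -/
lemma recip_reflect {j : ℕ} (hj : j < p - 1) :
    recip p j + recip p (p - 1 - 1 - j) = p * recip p j * recip p (p - 1 - 1 - j) := by
  have h1 := mul_recip hj
  have h2 := mul_recip (p := p) (j := p - 1 - 1 - j) (by omega)
  have h3 : ((p - 1 - 1 - j : ℕ) : ℤ_[p]) = p - 1 - 1 - j := by
    rw [Nat.cast_sub (by omega), Nat.cast_sub (by omega), Nat.cast_sub (by omega)]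
    simp
  rw [h3] at h2
  linear_combination (-recip p (p - 1 - 1 - j)) * h1 - recip p j * h2

lemma two_mul_powSum (s : ℕ) :
    2 * powSum p s = ∑ j ∈ Finset.range (p - 1), (recip p j ^ s + recip p (p - 1 - 1 - j) ^ s) := by
  rw [Finset.sum_add_distrib, Finset.sum_range_reflect (fun j => recip p j ^ s), powSum, two_mul]

/-- Pairing `a` with `p - a` gives `2 H = ∑ p / (a (p - a))`, and `1 / (a (p - a))` expands as
`-(1/a² + p/a³ + p²/a⁴ + ⋯)`. -/
lemma two_mul_powSum_one :
    (p : ℤ_[p]) ^ 4 ∣ 2 * powSum p 1 + p * powSum p 2 + p ^ 2 * powSum p 3 + p ^ 3 * powSum p 4 := by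
  rw [two_mul_powSum]
  simp only [powSum, Finset.mul_sum, ← Finset.sum_add_distrib]
  refine Finset.dvd_sum fun j hj => ?_
  have h := recip_reflect (Finset.mem_range.mp hj)
  generalize recip p (p - 1 - 1 - j) = y at *
  generalize recip p j = x at *
  refine ⟨x ^ 4 * y, ?_⟩
  linear_combination (1 + p * x + p ^ 2 * x ^ 2 + p ^ 3 * x ^ 3) * h

lemma two_mul_powSum_three : (p : ℤ_[p]) ^ 2 ∣ 2 * powSum p 3 + 3 * p * powSum p 4 := by
  rw [two_mul_powSum]
  simp only [powSum, Finset.mul_sum, ← Finset.sum_add_distrib]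
  refine Finset.dvd_sum fun j hj => ?_
  have h := recip_reflect (Finset.mem_range.mp hj)
  generalize recip p (p - 1 - 1 - j) = y at *
  generalize recip p j = x at *
  have h3 : x ^ 3 + y ^ 3 = p * x * y * (x ^ 2 - x * y + y ^ 2) := by
    linear_combination (x ^ 2 - x * y + y ^ 2) * h
  have h4 : (p : ℤ_[p]) ∣ x * y * (x ^ 2 - x * y + y ^ 2) + 3 * x ^ 4 := by
    exact ⟨x * (x * y) * (y ^ 2 - 2 * x * y + 3 * x ^ 2), by
      linear_combination x * (y ^ 2 - 2 * x * y + 3 * x ^ 2) * h⟩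
  obtain ⟨c, hc⟩ := h4
  exact ⟨c, by linear_combination h3 + p * hc⟩

lemma two_cancel (h3 : 2 < p) {d x : ℤ_[p]} (h : d ∣ 2 * x) : d ∣ x := by
  have h2 := mul_recip (p := p) (j := 1) (by omega)
  have : x = recip p 1 * (2 * x) := by
    push_cast at h2
    linear_combination (-x) * h2
  rw [this]
  exact h.mul_left _

/-! ### Binomial coefficients as products -/

lemma prod_one_add (k : ℕ) (hk : k ≤ p - 1) :
    ∏ j ∈ Finset.range k, (1 + p * recip p j) = (Nat.choose (p + k) k : ℤ_[p]) := by
  induction k with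
  | zero => simp
  | succ k ih =>
    rw [Finset.prod_range_succ, ih (by omega)]
    have h1 := mul_recip (p := p) (j := k) (by omega)
    have h2 : ((p : ℤ_[p]) + k + 1) * Nat.choose (p + k) k =
        Nat.choose (p + (k + 1)) (k + 1) * (k + 1) := by
      exact_mod_cast Nat.add_one_mul_choose_eq (p + k) k
    linear_combination recip p k * h2 + (Nat.choose (p + (k + 1)) (k + 1) -
      Nat.choose (p + k) k : ℤ_[p]) * h1

lemma prod_one_sub (N k : ℕ) (hN : 0 < N) (hk : k ≤ p - 1) (hkN : k ≤ N - 1) :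
    ∏ j ∈ Finset.range k, (1 - N * recip p j) = (-1) ^ k * (Nat.choose (N - 1) k : ℤ_[p]) := by
  induction k with
  | zero => simp
  | succ k ih =>
    rw [Finset.prod_range_succ, ih (by omega) (by omega)]
    have h1 := mul_recip (p := p) (j := k) (by omega)
    have h2 : (Nat.choose (N - 1) (k + 1) : ℤ_[p]) * (k + 1) =
        Nat.choose (N - 1) k * (N - 1 - k) := by
      have h3 : ((N - 1 - k : ℕ) : ℤ_[p]) = N - 1 - k := by
        rw [Nat.cast_sub (by omega), Nat.cast_sub (by omega)]
        simp
      rw [← h3]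
      exact_mod_cast Nat.choose_succ_right_eq (N - 1) k
    rw [pow_succ]
    linear_combination (-1) ^ k * (recip p k * h2 - (Nat.choose (N - 1) (k + 1) +
      Nat.choose (N - 1) k : ℤ_[p]) * h1)

lemma choose_pred_succ (k : ℕ) (hk : k < p - 1) :
    (Nat.choose (p - 1 + (k + 1)) (k + 1) : ℤ_[p]) = p * recip p k * Nat.choose (p + k) k := by
  have h1 := mul_recip hk
  have h2 : (Nat.choose (p + k) (k + 1) : ℤ_[p]) * (k + 1) = Nat.choose (p + k) k * p := by
    have := Nat.choose_succ_right_eq (p + k) k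
    rw [Nat.add_sub_cancel] at this
    exact_mod_cast this
  rw [show p - 1 + (k + 1) = p + k by omega]
  linear_combination recip p k * h2 - (Nat.choose (p + k) (k + 1) : ℤ_[p]) * h1

/-- A refinement of Wolstenholme's theorem: `C(2p - 1, p - 1) = ∏ (1 + p/j)`, and since
`∏ (1 - p/j) = 1` for odd `p`, this equals `∏ (1 - p²/j²)`. -/
lemma two_mul_choose (hodd : Odd p) :
    (p : ℤ_[p]) ^ 5 ∣ 2 * (Nat.choose (p + (p - 1)) (p - 1) : ℤ_[p]) -
      (2 - 2 * p ^ 2 * powSum p 2 + p ^ 4 * (powSum p 2 ^ 2 - powSum p 4)) := by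
  have h := prod_quad_dvd (p : ℤ_[p]) (recip p) (p - 1)
  have he : Even (p - 1) := Nat.Odd.sub_odd hodd odd_one
  rw [Finset.prod_mul_distrib, prod_one_add _ le_rfl,
    prod_one_sub p _ hp.out.pos le_rfl le_rfl, he.neg_one_pow, Nat.choose_self] at h
  simpa [powSum] using h

/-- The alternating sum `∑_{k<p} (-1)^k C(p + k - 1, k)² C(2p - 1, k)`, with `2p - 1` written as
`2 (p - 1) + 1`; the two agree for `p ≥ 1`. -/
def altSum (p : ℕ) : ℤ :=
  ∑ k ∈ Finset.range p, (-1) ^ k * (Nat.choose (p - 1 + k) k : ℤ) ^ 2 *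
    (Nat.choose (2 * (p - 1) + 1) k : ℤ)

lemma altSum_eq :
    (altSum p : ℤ_[p]) = 1 + ∑ k ∈ Finset.range (p - 1), p ^ 2 * recip p k ^ 2 *
      (1 - 2 * p * recip p k) *
        ∏ j ∈ Finset.range k, ((1 + p * recip p j) ^ 2 * (1 - 2 * p * recip p j)) := by
  have hpos := hp.out.pos
  have h4 : Finset.range p = Finset.range (p - 1 + 1) := by congr 1; omega
  rw [altSum, h4, Finset.sum_range_succ']
  push_cast
  rw [add_comm]
  congr 1
  · simp
  refine Finset.sum_congr rfl fun k hk => ?_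
  have hk' := Finset.mem_range.mp hk
  rw [choose_pred_succ k hk', show 2 * (p - 1) + 1 = 2 * p - 1 by omega]
  have h := prod_one_sub (p := p) (2 * p) (k + 1) (by omega) (by omega) (by omega)
  push_cast at h
  have h' : (-1 : ℤ_[p]) ^ (k + 1) * (p * recip p k * Nat.choose (p + k) k) ^ 2 *
      Nat.choose (2 * p - 1) (k + 1) = (p * recip p k * Nat.choose (p + k) k) ^ 2 *
      ((-1 : ℤ_[p]) ^ (k + 1) * Nat.choose (2 * p - 1) (k + 1)) := by ring
  rw [h', ← h, Finset.prod_range_succ, ← prod_one_add k hk'.le, Finset.prod_mul_distrib,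
    Finset.prod_pow]
  ring

lemma two_mul_altSum :
    (p : ℤ_[p]) ^ 5 ∣ 2 * (altSum p : ℤ_[p]) -
      (2 + 2 * p ^ 2 * powSum p 2 - 4 * p ^ 3 * powSum p 3 -
        3 * p ^ 4 * (powSum p 2 ^ 2 - powSum p 4)) := by
  rw [altSum_eq]
  exact sum_expansion_dvd (p : ℤ_[p]) (recip p) (p - 1)

/-! ### The congruences for the closed form -/

lemma weak_congr (hodd : Odd p) (h3 : 3 < p) :
    (p : ℤ_[p]) ^ 3 ∣ (Nat.choose (p + (p - 1)) (p - 1) : ℤ_[p]) ^ 2 * altSum p - 1 := by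
  obtain ⟨a, ha⟩ := p_dvd_powSum (p := p) (s := 2) (by omega) (by omega)
  obtain ⟨w, hw⟩ := two_mul_choose hodd
  obtain ⟨t, ht⟩ := two_mul_altSum (p := p)
  -- Multiply by `8`, so that only `2 C(2p - 1, p - 1)` and `2 altSum p` occur.
  apply two_cancel (by omega)
  apply two_cancel (by omega)
  apply two_cancel (by omega)
  rw [ha] at hw ht
  generalize (Nat.choose (p + (p - 1)) (p - 1) : ℤ_[p]) = W at *
  generalize (altSum p : ℤ_[p]) = T at *
  generalize powSum p 3 = s3 at *
  generalize powSum p 4 = s4 at *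
  generalize (p : ℤ_[p]) = P at *
  obtain ⟨w', hw'⟩ : ∃ w', 2 * W = 2 + P ^ 3 * w' :=
    ⟨-2 * a + P * ((P * a) ^ 2 - s4) + P ^ 2 * w, by linear_combination hw⟩
  obtain ⟨t', ht'⟩ : ∃ t', 2 * T = 2 + P ^ 3 * t' :=
    ⟨2 * a - 4 * s3 - 3 * P * ((P * a) ^ 2 - s4) + P ^ 2 * t, by linear_combination ht⟩
  have : 2 * (2 * (2 * (W ^ 2 * T - 1))) = (2 * W) ^ 2 * (2 * T) - 8 := by ring
  rw [this, hw', ht']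
  exact ⟨8 * w' + 4 * t' + 4 * P ^ 3 * w' * t' + 2 * P ^ 3 * w' ^ 2 + P ^ 6 * w' ^ 2 * t', by ring⟩

lemma strong_congr (hodd : Odd p) (h5 : 5 < p) :
    (p : ℤ_[p]) ^ 5 ∣ (Nat.choose (p + (p - 1)) (p - 1) : ℤ_[p]) ^ 2 * altSum p - 1 -
      2 * p * powSum p 1 := by
  obtain ⟨a, ha⟩ := p_dvd_powSum (p := p) (s := 2) (by omega) (by omega)
  obtain ⟨c, hc⟩ := p_dvd_powSum (p := p) (s := 4) (by omega) (by omega)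
  obtain ⟨b, hb⟩ : (p : ℤ_[p]) ^ 2 ∣ powSum p 3 := by
    apply two_cancel (by omega)
    obtain ⟨b, hb⟩ := two_mul_powSum_three (p := p)
    exact ⟨b - 3 * c, by rw [hc] at hb; linear_combination hb⟩
  obtain ⟨w, hw⟩ := two_mul_choose hodd
  obtain ⟨t, ht⟩ := two_mul_altSum (p := p)
  obtain ⟨h, hh⟩ := two_mul_powSum_one (p := p)
  -- Multiply by `8`, so that only `2 C(2p - 1, p - 1)`, `2 altSum p` and `2 H` occur.
  apply two_cancel (by omega)
  apply two_cancel (by omega)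
  apply two_cancel (by omega)
  rw [ha, hc] at hw
  rw [ha, hb, hc] at ht hh
  generalize (Nat.choose (p + (p - 1)) (p - 1) : ℤ_[p]) = W at *
  generalize (altSum p : ℤ_[p]) = T at *
  generalize powSum p 1 = H at *
  generalize (p : ℤ_[p]) = P at *
  obtain ⟨w', hw'⟩ : ∃ w', 2 * W = 2 - 2 * P ^ 3 * a + P ^ 5 * w' :=
    ⟨P * a ^ 2 - c + w, by linear_combination hw⟩
  obtain ⟨t', ht'⟩ : ∃ t', 2 * T = 2 + 2 * P ^ 3 * a + P ^ 5 * t' :=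
    ⟨-4 * b - 3 * (P * a ^ 2 - c) + t, by linear_combination ht⟩
  obtain ⟨h', hh'⟩ : ∃ h', 2 * H = -P ^ 2 * a + P ^ 4 * h' :=
    ⟨-b - c + h, by linear_combination hh⟩
  have : 2 * (2 * (2 * (W ^ 2 * T - 1 - 2 * P * H))) =
    (2 * W) ^ 2 * (2 * T) - 8 - 8 * P * (2 * H) := by ring
  -- With `A = P³ a`, the main part is `(2 - 2A)² (2 + 2A) - 8 + 8A = -8A² + 8A³`.
  rw [this, hw', ht', hh']
  exact ⟨-8 * P * a ^ 2 + 8 * P ^ 4 * a ^ 3 +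
    2 * (2 - 2 * P ^ 3 * a) * (2 + 2 * P ^ 3 * a) * w' +
    P ^ 5 * w' ^ 2 * (2 + 2 * P ^ 3 * a) + t' * (2 - 2 * P ^ 3 * a + P ^ 5 * w') ^ 2 - 8 * h',
    by ring⟩

end padic

lemma closed_form_int (p : ℕ) (hp : 0 < p) :
    ∑ k ∈ Finset.range p, (205 * (k : ℤ) ^ 2 + 160 * k + 32) * (-1) ^ k *
        (Nat.choose (2 * k) k : ℤ) ^ 5 =
      32 * (p : ℤ) ^ 2 * (Nat.choose (p + (p - 1)) (p - 1) : ℤ) ^ 2 * altSum p := by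
  obtain ⟨m, rfl⟩ : ∃ m, p = m + 1 := ⟨p - 1, by omega⟩
  have h := closed_form m
  have h2 : (Nat.centralBinom (m + 1) : ℚ) = 2 * Nat.choose (m + 1 + m) m := by
    have h1 := Nat.succ_mul_centralBinom_succ m
    have h3 := Nat.add_one_mul_choose_eq (m + m) m
    have h4 : (m + 1 + m).choose m = (m + m + 1).choose (m + 1) := by
      rw [show m + 1 + m = m + m + 1 by ring]
      exact Nat.choose_symm_of_eq_add (by ring)
    rw [h4]
    rw [Nat.centralBinom_eq_two_mul_choose m, two_mul m] at h1
    have h5 : (m + 1) * (m + 1).centralBinom = (m + 1) * (2 * (m + m + 1).choose (m + 1)) := by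
      linarith
    exact_mod_cast Nat.eq_of_mul_eq_mul_left (Nat.succ_pos m) h5
  simp only [wzF, h2, mul_assoc, ← Finset.mul_sum] at h
  have h6 : ((∑ k ∈ Finset.range (m + 1), (205 * (k : ℤ) ^ 2 + 160 * k + 32) * (-1) ^ k *
        (Nat.choose (2 * k) k : ℤ) ^ 5 : ℤ) : ℚ) =
      ((32 * ((m + 1 : ℕ) : ℤ) ^ 2 * (Nat.choose (m + 1 + m) m : ℤ) ^ 2 * altSum (m + 1) : ℤ) : ℚ) := by
    rw [altSum]
    push_cast
    simp only [mul_assoc]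
    rw [h]
    ring
  rw [Nat.add_sub_cancel]
  exact_mod_cast h6

lemma coe_recip {p : ℕ} [Fact p.Prime] {j : ℕ} (hj : j < p - 1) :
    (recip p j : ℚ_[p]) = 1 / ((j : ℚ_[p]) + 1) := by
  have h := congrArg (fun x : ℤ_[p] => (x : ℚ_[p])) (mul_recip hj)
  push_cast at h
  exact eq_one_div_of_mul_eq_one_right h

theorem stmt18 (p : ℕ) [Fact p.Prime] (hodd : Odd p) :
    (p ≠ 5 →
      ‖(((∑ k ∈ Finset.range p,
              (205 * (k : ℚ) ^ 2 + 160 * k + 32) * (-1) ^ k *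
                (Nat.choose (2 * k) k : ℚ) ^ 5) -
            32 * (p : ℚ) ^ 2 -
            64 * (p : ℚ) ^ 3 * ∑ k ∈ Finset.range (p - 1), (1 : ℚ) / ((k : ℚ) + 1) :
          ℚ) : ℚ_[p])‖ ≤ (p : ℝ) ^ (-7 : ℤ)) ∧
    (3 < p →
      (∑ k ∈ Finset.range ((p - 1) / 2 + 1),
          (205 * (k : ℤ) ^ 2 + 160 * k + 32) * (-1) ^ k *
            (Nat.choose (2 * k) k : ℤ) ^ 5)
        ≡ 32 * (p : ℤ) ^ 2 [ZMOD ((p : ℤ) ^ 5)]) := by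
  have hp : p.Prime := Fact.out
  have hcf := closed_form_int p hp.pos
  constructor
  · intro h5
    rcases Nat.lt_or_ge 5 p with h | h
    · obtain ⟨c, hc⟩ := strong_congr hodd h
      set x : ℤ_[p] := 32 * p ^ 2 * ((Nat.choose (p + (p - 1)) (p - 1) : ℤ_[p]) ^ 2 * altSum p - 1 -
        2 * p * powSum p 1) with hx
      have hxc : (p : ℤ_[p]) ^ 7 ∣ x := ⟨32 * c, by rw [hx, hc]; ring⟩
      have hH : (powSum p 1 : ℚ_[p]) = ∑ k ∈ Finset.range (p - 1), 1 / ((k : ℚ_[p]) + 1) := by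
        rw [powSum, PadicInt.coe_sum]
        refine Finset.sum_congr rfl fun j hj => ?_
        rw [pow_one, coe_recip (Finset.mem_range.mp hj)]
      have hcf' := congrArg (fun z : ℤ => (z : ℚ_[p])) hcf
      push_cast at hcf'
      have key : ‖x‖ ≤ (p : ℝ) ^ (-7 : ℤ) := (PadicInt.norm_le_pow_iff_mem_span_pow x 7).mpr
        (Ideal.mem_span_singleton.mpr hxc)
      rw [PadicInt.norm_def] at key
      refine le_of_eq_of_le (congrArg norm ?_) key
      have e32 : ((32 : ℤ_[p]) : ℚ_[p]) = 32 := rfl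
      have e2 : ((2 : ℤ_[p]) : ℚ_[p]) = 2 := rfl
      rw [hx]
      push_cast
      rw [hcf', hH, e32, e2]
      ring
    · have h3 : p = 3 := by
        have := hp.two_le
        interval_cases p <;> simp_all +decide
      subst h3
      -- For `p = 3` the rational number in question is the integer `9097920 = 3 ^ 7 * 4160`.
      have key : ‖((3 ^ 7 * 4160 : ℤ) : ℚ_[3])‖ ≤ ((3 : ℕ) : ℝ) ^ (-7 : ℤ) :=
        (Padic.norm_int_le_pow_iff_dvd (p := 3) (3 ^ 7 * 4160) 7).mpr ⟨4160, by norm_num⟩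
      refine le_of_eq_of_le (congrArg norm ?_) key
      simp only [Finset.sum_range_succ, Finset.sum_range_zero, Nat.choose]
      norm_num [Nat.choose]
  · intro h3
    have hfull : (p : ℤ) ^ 5 ∣ ∑ k ∈ Finset.range p, (205 * (k : ℤ) ^ 2 + 160 * k + 32) * (-1) ^ k *
        (Nat.choose (2 * k) k : ℤ) ^ 5 - 32 * (p : ℤ) ^ 2 := by
      rw [hcf, ← PadicInt.pow_p_dvd_int_iff]
      obtain ⟨c, hc⟩ := weak_congr hodd h3
      refine ⟨32 * c, ?_⟩
      push_cast
      linear_combination 32 * (p : ℤ_[p]) ^ 2 * hc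
    -- For `(p - 1) / 2 < k < p` the prime `p` divides `C(2k, k)`.
    have hsub : (p - 1) / 2 + 1 ≤ p := by omega
    rw [← Finset.sum_range_add_sum_Ico _ hsub] at hfull
    have htail : (p : ℤ) ^ 5 ∣ ∑ k ∈ Finset.Ico ((p - 1) / 2 + 1) p,
        (205 * (k : ℤ) ^ 2 + 160 * k + 32) * (-1) ^ k * (Nat.choose (2 * k) k : ℤ) ^ 5 := by
      refine Finset.dvd_sum fun k hk => ?_
      have hk' := Finset.mem_Ico.mp hk
      have hd : p ∣ Nat.choose (k + k) k := hp.dvd_choose_add hk'.2 hk'.2 (by omega)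
      rw [← two_mul] at hd
      exact Dvd.dvd.mul_left (pow_dvd_pow_of_dvd (Int.natCast_dvd_natCast.mpr hd) 5) _
    refine (Int.modEq_iff_dvd.mpr ?_).symm
    rw [add_sub_right_comm] at hfull
    exact (dvd_add_left htail).mp hfull
end

section
/- Let p be a prime greater than 3, and let ε = 1 if p ≡ 1 (mod 3) and ε = −1 if p ≡ 2 (mod 3) (the Legendre symbol (p/3)). Then the rational number ∑_{k=0}^{p−1} (15k + 4) C(2k, k)² C(3k, k) / (−27)^k − 4εp has p-adic valuation at least 2; equivalently, ∑_{k=0}^{p−1} (15k + 4) C(2k, k)² C(3k, k) / (−27)^k ≡ 4 (p/3) p (mod p²). -/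
/-!
For a rational `q` consider the deformed summand (`wzTerm q 0 n`)

  `t_n(q) = (-1)^n (2n)! / n!² · (45 n² + 27 n + 4 - 2 q²)`
  `  · ∏_{i<n} ((3i+1)² - q²)((3i+2)² - q²) / ((3i+2)(3i+4)((3i+3)² - 4q²))`,

which depends on `q²` only. At `q = 0` the polynomial factors as `(3n+1)(15n+4)`, the products
collapse, and `t_n(0)` is the summand of the theorem (`wzTerm_zero`).

If `q` is a natural number prime to 3, then `t_n(q) = 0` for `n > q / 3`, and the terminating sum
has the closed form `∑ t_n(q) = 2 (q/3) q`, with `(q/3)` the Legendre symbol (`sum_wzTerm_of_one`,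
`sum_wzTerm_of_two`). This comes from a WZ pair (`wz_step`): shifting the index of the numerator
product by `k` gives terms `wzTerm q k n` whose difference in `k` is a difference in `n` of
`wzMate q k n`. It is an instance of the well-poised pair
`F(n,k) = A(n) (n - 2k) ∏_b (b-k)_n` behind the acceleration of Dougall's `5F4` sum, with `b`
running over `(1 ± q)/3` and `(2 ± q)/3`.

For `n < p`, apart from the factor `∏ (3i+2)(3i+4)`, whose `p`-adic valuation is at most 2 since
it divides `(3n+1)!`, the summand is a `p`-integral rational function of `v = q²`. Hence it is
affine in `v` modulo `p⁴` when `p² ∣ v`, and extrapolating from `v = p², 4p²` to `v = 0` gives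
`3 t_n(0) ≡ 4 t_n(p) - t_n(2p)` modulo `p²` (`norm_comb`). Summing over `n < p`,
`3 ∑ t_n(0) ≡ 4 · 2 (p/3) p - 2 (2p/3) (2p) = 12 (p/3) p`, because `(2p/3) = -(p/3)`.
-/

open Finset

/-! ### The WZ pair and the terminating sum -/

/-- One step of the numerator product, equal to
`81 (j + (1-q)/3) (j + (1+q)/3) (j + (2-q)/3) (j + (2+q)/3)`. -/
def quarticFactor (q j : ℚ) : ℚ := ((3 * j + 1) ^ 2 - q ^ 2) * ((3 * j + 2) ^ 2 - q ^ 2)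

/-- The numerator product with its index shifted by `k`. -/
def numProd (q k : ℚ) (n : ℕ) : ℚ := ∏ i ∈ range n, quarticFactor q (i - k)

/-- One step of the denominator product; the factor `(i+1)²` accounts for `n!²`. -/
def denFactor (q : ℚ) (i : ℕ) : ℚ :=
  ((i : ℚ) + 1) ^ 2 * ((3 * i + 2) * (3 * i + 4)) * ((3 * i + 3) ^ 2 - 4 * q ^ 2)

/-- The denominator product, including `n!²`. -/
def denProd (q : ℚ) (n : ℕ) : ℚ := ∏ i ∈ range n, denFactor q i

/-- The deformed summand: `k` is the WZ parameter, and `q = k = 0` is the original sum. -/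
def wzTerm (q k : ℚ) (n : ℕ) : ℚ :=
  (-1) ^ n * ((2 * n).factorial : ℚ) * numProd q k n / denProd q n *
    (18 * k ^ 2 - 18 * (3 * n + 1) * k + 45 * n ^ 2 + 27 * n + 4 - 2 * q ^ 2)

/-- The WZ mate of `wzTerm`, see `wz_step`. -/
def wzMate (q k : ℚ) (n : ℕ) : ℚ :=
  (-1) ^ n * ((2 * n + 1).factorial : ℚ) * numProd q k n / denProd q n * (n - 2 * k)

lemma denFactor_ne_zero {q : ℚ} (hq : ∀ i : ℕ, (3 * (i : ℚ) + 3) ^ 2 - 4 * q ^ 2 ≠ 0) (i : ℕ) :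
    denFactor q i ≠ 0 := by
  unfold denFactor
  exact mul_ne_zero (by positivity) (hq i)

lemma numProd_shift (q k : ℚ) (n : ℕ) :
    numProd q (k + 1) (n + 1) = quarticFactor q (-k - 1) * numProd q k n := by
  unfold numProd
  rw [prod_range_succ', mul_comm]
  congr 1
  · congr 1; push_cast; ring
  · refine prod_congr rfl fun i _ => ?_
    congr 1; push_cast; ring

lemma wz_step_s19 {q : ℚ} (hq : ∀ i : ℕ, (3 * (i : ℚ) + 3) ^ 2 - 4 * q ^ 2 ≠ 0) (k : ℚ) (m : ℕ) :
    wzTerm q (k + 1) (m + 1) - wzTerm q k (m + 1) =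
      -18 * (wzMate q k (m + 1) - wzMate q k m) := by
  have hD : denProd q m ≠ 0 := prod_ne_zero_iff.2 fun i _ => denFactor_ne_zero hq i
  have hd := denFactor_ne_zero hq m
  have h1 : denProd q (m + 1) = denProd q m * denFactor q m := prod_range_succ _ _
  have h2 : numProd q k (m + 1) = numProd q k m * quarticFactor q (m - k) := prod_range_succ _ _
  have h3 : ((2 * (m + 1)).factorial : ℚ) = (2 * m + 2) * ((2 * m + 1).factorial : ℚ) := by
    rw [show 2 * (m + 1) = (2 * m + 1) + 1 by ring, Nat.factorial_succ]; push_cast; ring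
  have h4 : ((2 * (m + 1) + 1).factorial : ℚ) =
      (2 * m + 3) * ((2 * m + 2) * ((2 * m + 1).factorial : ℚ)) := by
    rw [Nat.factorial_succ, Nat.cast_mul, h3]; push_cast; ring
  unfold wzTerm wzMate
  rw [numProd_shift, h1, h2, h3, h4]
  push_cast
  generalize numProd q k m = Q
  generalize ((2 * m + 1).factorial : ℚ) = T
  field_simp
  unfold denFactor quarticFactor
  ring

lemma numProd_eq_zero {q k : ℚ} {n : ℕ} (i : ℕ) (hi : i < n)
    (h : quarticFactor q (i - k) = 0) : numProd q k n = 0 :=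
  prod_eq_zero (mem_range.2 hi) h

/-- The terminating sum. The hypotheses say that `quarticFactor q` vanishes at `N` and `-N-1`, as
happens for `q = 3N+1` and `q = 3N+2`: the first makes the sum terminate at `N`, the second kills
all terms with `n ≥ 1` once `k = N + 1`. Moving `k` from `0` to `N + 1` changes the sum over
`n ≥ 1` by `18 ∑_{k ≤ N} wzMate q k 0 = -36 ∑_{k ≤ N} k`. -/
lemma sum_wzTerm {q : ℚ} {N : ℕ} (hq : ∀ i : ℕ, (3 * (i : ℚ) + 3) ^ 2 - 4 * q ^ 2 ≠ 0)
    (h1 : quarticFactor q N = 0) (h2 : quarticFactor q (-N - 1) = 0) {M : ℕ} (hM : N < M) :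
    ∑ n ∈ range M, wzTerm q 0 n = 4 - 2 * q ^ 2 + 18 * N * (N + 1) := by
  have hvan : ∀ n, N < n → wzTerm q 0 n = 0 := fun n hn => by
    simp [wzTerm, numProd_eq_zero (k := 0) N hn (by simpa using h1)]
  have key : ∀ K : ℕ, K ≤ N + 1 →
      ∑ m ∈ range (2 * N + 1), wzTerm q K (m + 1) =
        ∑ m ∈ range (2 * N + 1), wzTerm q 0 (m + 1) - 18 * K * (K - 1) := by
    intro K
    induction K with
    | zero => intro _; simp
    | succ K ih =>
      intro hK
      -- The factor with index `i = N + k` vanishes, and `N + k ≤ 2N`.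
      have e1 : wzMate q K (2 * N + 1) = 0 := by
        simp [wzMate, numProd_eq_zero (k := (K : ℚ)) (n := 2 * N + 1) (N + K) (by omega)
          (by push_cast; rw [add_sub_cancel_right]; exact h1)]
      have e2 : wzMate q K 0 = -2 * K := by simp [wzMate, numProd, denProd]
      have e3 : ∑ m ∈ range (2 * N + 1), (wzTerm q (K + 1) (m + 1) - wzTerm q K (m + 1)) =
          -36 * K := by
        simp_rw [wz_step_s19 hq]
        rw [← mul_sum, sum_range_sub (wzMate q K), e1, e2]; ring
      rw [sum_sub_distrib, ih (by omega)] at e3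
      push_cast
      linarith
  have hlast : ∑ m ∈ range (2 * N + 1), wzTerm q ((N + 1 : ℕ) : ℚ) (m + 1) = 0 := by
    refine sum_eq_zero fun m _ => ?_
    simp [wzTerm, numProd_eq_zero (k := (N : ℚ) + 1) (n := m + 1) 0 (by omega)
      (by rw [← h2]; congr 1; push_cast; ring)]
  have hk := key (N + 1) le_rfl
  rw [hlast] at hk
  have hsub : ∀ L, N < L → ∑ n ∈ range L, wzTerm q 0 n = ∑ n ∈ range (N + 1), wzTerm q 0 n := by
    intro L hL
    refine (sum_subset (range_mono hL) fun n _ hn => hvan n ?_).symm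
    simpa using hn
  rw [hsub M hM, ← hsub (2 * N + 2) (by omega), sum_range_succ']
  have h0 : wzTerm q 0 0 = 4 - 2 * q ^ 2 := by simp [wzTerm, numProd, denProd]
  rw [h0]
  push_cast at hk
  linarith

lemma denQuadratic_ne_zero {q : ℕ} (h3 : q % 3 ≠ 0) (i : ℕ) :
    (3 * (i : ℚ) + 3) ^ 2 - 4 * (q : ℚ) ^ 2 ≠ 0 := by
  intro h
  have h' : ((3 * (i : ℚ) + 3) ) = 2 * q := by
    have : (3 * (i : ℚ) + 3) ^ 2 = (2 * q) ^ 2 := by linarith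
    exact (pow_left_inj₀ (by positivity) (by positivity) two_ne_zero).1 this
  have : 3 * i + 3 = 2 * q := by exact_mod_cast h'
  omega

lemma sum_wzTerm_of_one {q M : ℕ} (h : q % 3 = 1) (hM : q < 3 * M) :
    ∑ n ∈ range M, wzTerm q 0 n = 2 * q := by
  obtain ⟨N, rfl⟩ : ∃ N, q = 3 * N + 1 := ⟨q / 3, by omega⟩
  rw [sum_wzTerm (N := N) (denQuadratic_ne_zero (by omega)) (by simp [quarticFactor])
    (by rw [quarticFactor]; push_cast; ring) (by omega)]
  push_cast; ring

lemma sum_wzTerm_of_two {q M : ℕ} (h : q % 3 = 2) (hM : q < 3 * M) :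
    ∑ n ∈ range M, wzTerm q 0 n = -2 * q := by
  obtain ⟨N, rfl⟩ : ∃ N, q = 3 * N + 2 := ⟨q / 3, by omega⟩
  rw [sum_wzTerm (N := N) (denQuadratic_ne_zero (by omega)) (by simp [quarticFactor])
    (by rw [quarticFactor]; push_cast; ring) (by omega)]
  push_cast; ring

/-! ### The undeformed summand -/

lemma wzTerm_zero (n : ℕ) : wzTerm 0 0 n =
    (15 * (n : ℚ) + 4) * (Nat.choose (2 * n) n : ℚ) ^ 2 * (Nat.choose (3 * n) n : ℚ) /
      (-27 : ℚ) ^ n := by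
  have hc1 : (Nat.choose (2 * n) n : ℚ) = (2 * n).factorial / (n.factorial * n.factorial) := by
    rw [Nat.cast_choose ℚ (by omega), show 2 * n - n = n by omega]
  have hc2 : (Nat.choose (3 * n) n : ℚ) =
      (3 * n).factorial / (n.factorial * (2 * n).factorial) := by
    rw [Nat.cast_choose ℚ (by omega), show 3 * n - n = 2 * n by omega]
  have h : numProd 0 0 n / denProd 0 n =
      (3 * n).factorial / (27 ^ n * (n.factorial : ℚ) ^ 5 * (3 * n + 1)) := by
    clear hc1 hc2
    induction n with
    | zero => simp [numProd, denProd]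
    | succ m ih =>
      have h1 : denProd 0 (m + 1) = denProd 0 m * denFactor 0 m := prod_range_succ _ _
      have h2 : numProd 0 0 (m + 1) = numProd 0 0 m * quarticFactor 0 (m - 0) :=
        prod_range_succ _ _
      have hf : ((3 * (m + 1)).factorial : ℚ) =
          (3 * m + 3) * ((3 * m + 2) * ((3 * m + 1) * ((3 * m).factorial : ℚ))) := by
        rw [show 3 * (m + 1) = 3 * m + 1 + 1 + 1 by ring, Nat.factorial_succ, Nat.factorial_succ,
          Nat.factorial_succ]
        push_cast; ring
      rw [h1, h2, mul_div_mul_comm, ih, hf, Nat.factorial_succ]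
      unfold quarticFactor denFactor
      push_cast
      field_simp
      ring
  have hpow : (-27 : ℚ) ^ n = (-1) ^ n * 27 ^ n := by rw [← mul_pow]; norm_num
  have hs : ((-1 : ℚ) ^ n) * (-1) ^ n = 1 := by rw [← mul_pow]; norm_num
  unfold wzTerm
  rw [mul_div_assoc, h, hc1, hc2, hpow]
  field_simp
  rw [pow_two, hs]
  ring

/-! ### `p`-adic estimates -/

lemma denLinear_mul (n : ℕ) :
    (∏ i ∈ range n, ((3 * i + 2) * (3 * i + 4))) * (3 ^ n * n.factorial) =
      (3 * n + 1).factorial := by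
  induction n with
  | zero => simp
  | succ m ih =>
    have h : (3 * (m + 1) + 1).factorial =
        (3 * m + 4) * ((3 * m + 3) * ((3 * m + 2) * (3 * m + 1).factorial)) := by
      simp only [← Nat.factorial_succ, show 3 * (m + 1) + 1 = 3 * m + 4 by ring]
    rw [prod_range_succ, h, ← ih, Nat.factorial_succ]
    ring

/-- The product divides `(3n+1)!`, hence `(3p-1)!`, whose `p`-adic valuation is 2. -/
lemma norm_denLinear {p : ℕ} [Fact p.Prime] (hp : 3 < p) {n : ℕ} (hn : n < p) :
    (p : ℝ) ^ (-2 : ℤ) ≤ ‖((∏ i ∈ range n, ((3 * i + 2) * (3 * i + 4)) : ℕ) : ℚ_[p])‖ := by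
  have hpp : p.Prime := Fact.out
  set E := ∏ i ∈ range n, ((3 * i + 2) * (3 * i + 4)) with hE
  have hE0 : E ≠ 0 := prod_ne_zero_iff.2 fun i _ => by positivity
  have hv : padicValNat p (3 * p - 1).factorial = 2 := by
    rw [show 3 * p - 1 = p * 2 + (p - 1) by omega,
      padicValNat_factorial_mul_add 2 (by omega), padicValNat_factorial_mul]
    have : padicValNat p (2).factorial = 0 := by
      apply padicValNat.eq_zero_of_not_dvd
      intro h
      have := Nat.le_of_dvd (by norm_num) h
      norm_num [Nat.factorial] at this
      omega
    omega
  have hdvd : E ∣ (3 * p - 1).factorial :=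
    (Dvd.intro _ (denLinear_mul n)).trans (Nat.factorial_dvd_factorial (by omega))
  have hle : padicValNat p E ≤ 2 := by
    rw [← hv]
    exact (padicValNat_dvd_iff_le (Nat.factorial_ne_zero _)).1 (pow_padicValNat_dvd.trans hdvd)
  rw [← Int.cast_natCast, Padic.norm_eq_zpow_neg_valuation (by exact_mod_cast hE0)]
  rw [Int.cast_natCast, Padic.valuation_natCast]
  exact zpow_le_zpow_right₀ (by exact_mod_cast hpp.one_lt.le) (by omega)

/-- On multiples of `m`, the function `f` agrees with an affine function modulo `m²`. -/
def LinearMod (m : ℤ) (f : ℤ → ℤ) : Prop :=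
  ∃ a b : ℤ, ∀ v, m ∣ v → m ^ 2 ∣ f v - (a + b * v)

lemma LinearMod.mul {m : ℤ} {f g : ℤ → ℤ} (hf : LinearMod m f) (hg : LinearMod m g) :
    LinearMod m fun v => f v * g v := by
  obtain ⟨a, b, hf⟩ := hf
  obtain ⟨c, d, hg⟩ := hg
  refine ⟨a * c, a * d + b * c, fun v hv => ?_⟩
  have h : m ^ 2 ∣ _ := dvd_add (dvd_add ((hf v hv).mul_right (g v)) ((hg v hv).mul_left (a + b * v)))
    ((pow_dvd_pow_of_dvd hv 2).mul_left (b * d))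
  refine (congrArg (m ^ 2 ∣ ·) ?_).mp h
  ring

lemma LinearMod.prod {m : ℤ} {f : ℕ → ℤ → ℤ} (hf : ∀ i, LinearMod m (f i)) (n : ℕ) :
    LinearMod m fun v => ∏ i ∈ range n, f i v := by
  induction n with
  | zero => exact ⟨1, 0, fun v _ => by simp⟩
  | succ n ih =>
    simp_rw [prod_range_succ]
    exact ih.mul (hf n)

lemma linearMod_affine (m a b : ℤ) : LinearMod m fun v => a - b * v :=
  ⟨a, -b, fun v _ => by simp [sub_eq_add_neg]⟩

/-- Extrapolation to `0` from the values of `f / g` at `m` and `4m`, cleared of denominators: the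
weights `3, -4, 1` at `0, m, 4m` annihilate affine functions. -/
lemma LinearMod.dvd {m : ℤ} {f g : ℤ → ℤ} (hf : LinearMod m f) (hg : LinearMod m g) :
    m ^ 2 ∣ 3 * f 0 * g m * g (4 * m) - 4 * f m * g 0 * g (4 * m) + f (4 * m) * g 0 * g m := by
  obtain ⟨a, b, hf⟩ := hf
  obtain ⟨c, d, hg⟩ := hg
  have F : ∀ v, m ∣ v → f v ≡ a + b * v [ZMOD m ^ 2] := fun v hv =>
    (Int.modEq_iff_dvd.2 (hf v hv)).symm
  have G : ∀ v, m ∣ v → g v ≡ c + d * v [ZMOD m ^ 2] := fun v hv =>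
    (Int.modEq_iff_dvd.2 (hg v hv)).symm
  have h4 : m ∣ 4 * m := dvd_mul_left _ _
  rw [← Int.modEq_zero_iff_dvd]
  calc _ ≡ 3 * (a + b * 0) * (c + d * m) * (c + d * (4 * m))
          - 4 * (a + b * m) * (c + d * 0) * (c + d * (4 * m))
          + (a + b * (4 * m)) * (c + d * 0) * (c + d * m) [ZMOD m ^ 2] := by
        exact (((((F 0 (dvd_zero m)).mul_left 3).mul (G m dvd_rfl)).mul (G _ h4)).sub
          ((((F m dvd_rfl).mul_left 4).mul (G 0 (dvd_zero m))).mul (G _ h4))).add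
          (((F _ h4).mul (G 0 (dvd_zero m))).mul (G m dvd_rfl))
    _ = m ^ 2 * (12 * a * d ^ 2 - 12 * b * c * d) := by ring
    _ ≡ 0 [ZMOD m ^ 2] := by simp [Int.modEq_zero_iff_dvd]

/-- The numerator of `wzTerm q 0 n` as a polynomial in `v = q²`, without `(-1)^n (2n)!`. -/
def numInt (n : ℕ) (v : ℤ) : ℤ :=
  (∏ i ∈ range n, (((3 * i + 1) ^ 2 - v) * ((3 * i + 2) ^ 2 - v))) *
    (45 * n ^ 2 + 27 * n + 4 - 2 * v)

/-- The part of the denominator of `wzTerm q 0 n` that depends on `v = q²`. -/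
def denInt (n : ℕ) (v : ℤ) : ℤ := ∏ i ∈ range n, ((3 * i + 3) ^ 2 - 4 * v)

lemma linearMod_numInt (m : ℤ) (n : ℕ) : LinearMod m (numInt n) := by
  refine (LinearMod.prod (fun i => LinearMod.mul ?_ ?_) n).mul ?_
  · simpa using linearMod_affine m ((3 * i + 1) ^ 2) 1
  · simpa using linearMod_affine m ((3 * i + 2) ^ 2) 1
  · exact linearMod_affine m (45 * n ^ 2 + 27 * n + 4) 2

lemma linearMod_denInt (m : ℤ) (n : ℕ) : LinearMod m (denInt n) :=
  LinearMod.prod (fun i => linearMod_affine m ((3 * i + 3) ^ 2) 4) n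

lemma wzTerm_eq (q n : ℕ) : wzTerm q 0 n =
    (-1) ^ n * ((2 * n).choose n : ℚ) * (numInt n (q ^ 2) : ℚ) /
      (((∏ i ∈ range n, ((3 * i + 2) * (3 * i + 4)) : ℕ) : ℚ) * (denInt n (q ^ 2) : ℚ)) := by
  have hc1 : (Nat.choose (2 * n) n : ℚ) = (2 * n).factorial / (n.factorial) ^ 2 := by
    rw [Nat.cast_choose ℚ (by omega), show 2 * n - n = n by omega, sq]
  have hf : (n.factorial : ℚ) = ∏ i ∈ range n, ((i : ℚ) + 1) := by
    rw [← prod_range_add_one_eq_factorial]; push_cast; rfl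
  have hD : denProd q n = (n.factorial : ℚ) ^ 2 *
      ((∏ i ∈ range n, ((3 * i + 2) * (3 * i + 4)) : ℕ) : ℚ) * (denInt n (q ^ 2) : ℚ) := by
    rw [hf, denProd, denInt, ← prod_pow]
    push_cast
    rw [← prod_mul_distrib, ← prod_mul_distrib]
    rfl
  have hN : (numInt n (q ^ 2) : ℚ) =
      numProd q 0 n * (45 * n ^ 2 + 27 * n + 4 - 2 * q ^ 2) := by
    simp [numInt, numProd, quarticFactor]
  rw [wzTerm, hD, hN, hc1]
  have : (n.factorial : ℚ) ≠ 0 := by positivity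
  simp only [div_eq_mul_inv, mul_inv]
  ring

lemma norm_denInt {p : ℕ} [Fact p.Prime] (hp : 3 < p) {n : ℕ} (hn : n < p) (v : ℤ)
    (hv : (p : ℤ) ∣ v) : ‖(denInt n v : ℚ_[p])‖ = 1 := by
  have hpp : p.Prime := Fact.out
  have hpi : Prime (p : ℤ) := Nat.prime_iff_prime_int.1 hpp
  refine le_antisymm (Padic.norm_int_le_one _) (not_lt.1 fun h => ?_)
  rw [Padic.norm_intCast_lt_one_iff, denInt, hpi.dvd_finsetProd_iff] at h
  obtain ⟨i, hi, h⟩ := h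
  have h' : (p : ℤ) ∣ (3 * i + 3) ^ 2 := (dvd_sub_left (hv.mul_left 4)).1 h
  have h'' : (p : ℤ) ∣ ((3 * (i + 1) : ℕ) : ℤ) := by
    have := hpi.dvd_of_dvd_pow h'
    push_cast; rwa [mul_add, mul_one]
  rcases hpp.dvd_mul.1 (Int.natCast_dvd_natCast.1 h'') with h | h
  · exact absurd (Nat.le_of_dvd (by norm_num) h) (by omega)
  · have := Nat.le_of_dvd (by omega) h
    have hi := mem_range.1 hi
    omega

/-- The bracket in `LinearMod.dvd` is divisible by `p⁴`, and the denominator has valuation at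
most 2. -/
lemma norm_comb {p : ℕ} [Fact p.Prime] (hp : 3 < p) {n : ℕ} (hn : n < p) :
    ‖((3 * wzTerm (0 : ℕ) 0 n - 4 * wzTerm p 0 n + wzTerm (2 * p : ℕ) 0 n : ℚ) : ℚ_[p])‖ ≤
      (p : ℝ) ^ (-2 : ℤ) := by
  have hpp : p.Prime := Fact.out
  have hE := norm_denLinear hp hn
  rw [wzTerm_eq, wzTerm_eq, wzTerm_eq]
  set E := ∏ i ∈ range n, ((3 * i + 2) * (3 * i + 4))
  have h0 := norm_denInt hp hn (((0 : ℕ) : ℤ) ^ 2) (by simp)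
  have h1 := norm_denInt hp hn ((p : ℤ) ^ 2) (dvd_pow_self _ two_ne_zero)
  have h2 := norm_denInt hp hn (((2 * p : ℕ) : ℤ) ^ 2)
    ((Int.natCast_dvd_natCast.2 (dvd_mul_left _ _)).trans (dvd_pow_self _ two_ne_zero))
  have hd := (linearMod_numInt ((p : ℤ) ^ 2) n).dvd (linearMod_denInt ((p : ℤ) ^ 2) n)
  rw [show (0 : ℤ) = ((0 : ℕ) : ℤ) ^ 2 by simp,
    show 4 * (p : ℤ) ^ 2 = ((2 * p : ℕ) : ℤ) ^ 2 by push_cast; ring] at hd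
  rw [← pow_mul, ← Nat.cast_pow] at hd
  have hB := (Padic.norm_int_le_pow_iff_dvd _ 4).2 hd
  generalize numInt n (((0 : ℕ) : ℤ) ^ 2) = a0 at *
  generalize numInt n ((p : ℤ) ^ 2) = a1 at *
  generalize numInt n (((2 * p : ℕ) : ℤ) ^ 2) = a2 at *
  generalize denInt n (((0 : ℕ) : ℤ) ^ 2) = r0 at *
  generalize denInt n ((p : ℤ) ^ 2) = r1 at *
  generalize denInt n (((2 * p : ℕ) : ℤ) ^ 2) = r2 at *
  have ne : ∀ {x : ℚ_[p]}, ‖x‖ = 1 → x ≠ 0 := by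
    rintro x hx rfl; simp at hx
  have hp0 : (0 : ℝ) < (p : ℝ) ^ (-2 : ℤ) := zpow_pos (by exact_mod_cast hpp.pos) _
  have hE0 : (E : ℚ_[p]) ≠ 0 := norm_pos_iff.1 (hp0.trans_le hE)
  have n0 := ne h0
  have n1 := ne h1
  have n2 := ne h2
  have hcomb : ((3 * ((-1) ^ n * ((2 * n).choose n : ℚ) * (a0 : ℚ) / ((E : ℚ) * (r0 : ℚ))) -
      4 * ((-1) ^ n * ((2 * n).choose n : ℚ) * (a1 : ℚ) / ((E : ℚ) * (r1 : ℚ))) +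
      (-1) ^ n * ((2 * n).choose n : ℚ) * (a2 : ℚ) / ((E : ℚ) * (r2 : ℚ)) : ℚ) : ℚ_[p]) =
      (((-1) ^ n * (2 * n).choose n : ℤ) : ℚ_[p]) *
        ((3 * a0 * r1 * r2 - 4 * a1 * r0 * r2 + a2 * r0 * r1 : ℤ) : ℚ_[p]) /
        (E * (r0 * r1 * r2)) := by
    push_cast
    field_simp
  rw [hcomb, norm_div, norm_mul, norm_mul, norm_mul, norm_mul, h0, h1, h2,
    div_le_iff₀ (by simpa using hE0)]
  have hpow : (p : ℝ) ^ (-2 : ℤ) * (p : ℝ) ^ (-2 : ℤ) = (p : ℝ) ^ (-(4 : ℕ) : ℤ) := by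
    rw [← zpow_add₀ (by exact_mod_cast hpp.ne_zero)]; norm_num
  calc _ ≤ 1 * (p : ℝ) ^ (-(4 : ℕ) : ℤ) :=
        mul_le_mul (Padic.norm_int_le_one _) hB (norm_nonneg _) zero_le_one
    _ = (p : ℝ) ^ (-2 : ℤ) * (p : ℝ) ^ (-2 : ℤ) := by rw [hpow, one_mul]
    _ ≤ _ := by
      rw [mul_one, mul_one, mul_one]
      exact mul_le_mul_of_nonneg_left hE hp0.le

theorem stmt19 (p : ℕ) [Fact p.Prime] (hp : 3 < p) :
    ‖(((∑ k ∈ Finset.range p,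
            (15 * (k : ℚ) + 4) * (Nat.choose (2 * k) k : ℚ) ^ 2 *
              (Nat.choose (3 * k) k : ℚ) / (-27 : ℚ) ^ k) -
          4 * (if p % 3 = 1 then (1 : ℚ) else -1) * p : ℚ) : ℚ_[p])‖
      ≤ (p : ℝ) ^ (-2 : ℤ) := by
  have hpp : p.Prime := Fact.out
  have hp3 : ¬ 3 ∣ p := fun h => by
    have := (Nat.prime_dvd_prime_iff_eq Nat.prime_three hpp).1 h
    omega
  simp_rw [← wzTerm_zero]
  set S := ∑ k ∈ range p, wzTerm 0 0 k with hS
  set ε : ℚ := if p % 3 = 1 then 1 else -1 with hε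
  have hp1 : ∑ n ∈ range p, wzTerm p 0 n = 2 * ε * p := by
    rcases (by omega : p % 3 = 1 ∨ p % 3 = 2) with h | h
    · rw [sum_wzTerm_of_one h (by omega), hε, if_pos h]; ring
    · rw [sum_wzTerm_of_two h (by omega), hε, if_neg (by omega)]; ring
  have hp2 : ∑ n ∈ range p, wzTerm (2 * p : ℕ) 0 n = -4 * ε * p := by
    rcases (by omega : p % 3 = 1 ∨ p % 3 = 2) with h | h
    · rw [sum_wzTerm_of_two (by omega) (by omega), hε, if_pos h]; push_cast; ring
    · rw [sum_wzTerm_of_one (by omega) (by omega), hε, if_neg (by omega)]; push_cast; ring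
  have hcomb : S - 4 * ε * p = (∑ n ∈ range p,
      (3 * wzTerm (0 : ℕ) 0 n - 4 * wzTerm p 0 n + wzTerm (2 * p : ℕ) 0 n)) / 3 := by
    rw [sum_add_distrib, sum_sub_distrib, ← mul_sum, ← mul_sum, hp1, hp2, Nat.cast_zero, ← hS]
    ring
  have h3 : ‖(3 : ℚ_[p])‖ = 1 := by
    have := (Padic.norm_natCast_eq_one_iff (p := p) (n := 3)).2
      ((Nat.coprime_primes hpp Nat.prime_three).2 (by omega))
    exact_mod_cast this
  rw [hcomb, Rat.cast_div, norm_div, Rat.cast_ofNat, h3, div_one, Rat.cast_sum]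
  exact IsUltrametricDist.norm_sum_le_of_forall_le_of_nonneg
    (zpow_nonneg (Nat.cast_nonneg p) _) fun n hn => norm_comb hp (mem_range.1 hn)
end
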